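/- arXiv:1808.09631 — 4 statements merged into one kernel-verified Lean document; each statement's English description precedes it below -/
import Mathlib

section
/- Let a < b, α ∈ (0,1], and let f : [a,b]×[a,b] → ℝ be C¹ with α-Hölder first partial derivatives (f ∈ C^{1+α}). Define (Hf)(x) := p.f.∫_x^b f(x,t)/(t−x) dt and h(x) := p.f.∫_x^b f(x,t)/(t−x)² dt + p.f.∫_x^b (∂f/∂x)(x,t)/(t−x) dt − (∂f/∂t)(x,x), for x ∈ (a,b). Assume that the three functions F₁(x) = f(x,x)/(b−x), F₂(x) = log(b−x)·(∂f/∂t)(x,x), F₃(x) = log(b−x)·(∂f/∂x)(x,x) are integrable on (a,b). Then Hf and h are integrable on (a,b) and for every φ ∈ C_0^∞((a,b)) one has ∫_a^b (Hf)(x) φ'(x) dx = − ∫_a^b h(x) φ(x) dx; i.e. Hf lies in W^{1,1}((a,b)) with weak derivative h. -/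
open MeasureTheory Filter Set
open scoped Topology

noncomputable section

/-- Hadamard finite part of order 1 with upper limit `b`. -/
def HasPF1Upper (g : ℝ → ℝ) (x b L : ℝ) : Prop :=
  Tendsto (fun ε : ℝ => (∫ t in (x + ε)..b, g t / (t - x)) + g x * Real.log ε)
    (𝓝[>] (0 : ℝ)) (𝓝 L)

/-- Hadamard finite part of order 2 with upper limit `b`, `d` being the right derivative
`g'(x⁺)`. -/
def HasPF2Upper (g : ℝ → ℝ) (d x b L : ℝ) : Prop :=
  Tendsto (fun ε : ℝ => (∫ t in (x + ε)..b, g t / (t - x) ^ 2) + d * Real.log ε - g x / ε)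
    (𝓝[>] (0 : ℝ)) (𝓝 L)

/-- The integral part of the regularized finite part, rescaled to `(0, 1]`. -/
def scaledIntegral (g : ℝ → ℝ) (x b : ℝ) : ℝ :=
  ∫ s in (0 : ℝ)..1, (g (x + (b - x) * s) - g x) / s

/-- The value of the Hadamard finite part of order 1 of a Hölder continuous function. -/
def finitePart (g : ℝ → ℝ) (x b : ℝ) : ℝ :=
  scaledIntegral g x b + g x * Real.log (b - x)

lemma add_sub_mul_mem_Icc {x b s : ℝ} (hxb : x ≤ b) (hs : s ∈ Icc (0 : ℝ) 1) :
    x + (b - x) * s ∈ Icc x b := by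
  constructor <;> nlinarith [hs.1, hs.2, mul_nonneg (sub_nonneg.2 hxb) hs.1,
    mul_nonneg (sub_nonneg.2 hxb) (sub_nonneg.2 hs.2)]

lemma abs_scaled_quotient_le {g : ℝ → ℝ} {x b C β s : ℝ} (hxb : x ≤ b)
    (hg : ∀ t ∈ Icc x b, |g t - g x| ≤ C * |t - x| ^ β) (hs : s ∈ Ioc (0 : ℝ) 1) :
    |(g (x + (b - x) * s) - g x) / s| ≤ C * (b - x) ^ β * s ^ (β - 1) := by
  have h := hg _ (add_sub_mul_mem_Icc hxb (Ioc_subset_Icc_self hs))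
  rw [add_sub_cancel_left, abs_of_nonneg (mul_nonneg (sub_nonneg.2 hxb) hs.1.le),
    Real.mul_rpow (sub_nonneg.2 hxb) hs.1.le] at h
  rw [abs_div, abs_of_pos hs.1, Real.rpow_sub_one hs.1.ne', div_le_iff₀ hs.1]
  calc _ ≤ _ := h
    _ = _ := by field_simp [hs.1.ne']

lemma continuousOn_scaled_quotient {g : ℝ → ℝ} {x b : ℝ} (hxb : x ≤ b)
    (hc : ContinuousOn g (Icc x b)) :
    ContinuousOn (fun s => (g (x + (b - x) * s) - g x) / s) (Ioc 0 1) := by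
  refine ContinuousOn.div ((hc.comp (by fun_prop) ?_).sub continuousOn_const) continuousOn_id
    fun s hs => hs.1.ne'
  exact fun s hs => add_sub_mul_mem_Icc hxb (Ioc_subset_Icc_self hs)

lemma aestronglyMeasurable_scaled_quotient {g : ℝ → ℝ} {x b : ℝ} (hxb : x ≤ b)
    (hc : ContinuousOn g (Icc x b)) :
    AEStronglyMeasurable (fun s => (g (x + (b - x) * s) - g x) / s)
      (volume.restrict (uIoc 0 1)) := by
  rw [uIoc_of_le zero_le_one]
  exact (continuousOn_scaled_quotient hxb hc).aestronglyMeasurable measurableSet_Ioc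

lemma intervalIntegrable_holder_bound (C : ℝ) {β : ℝ} (hβ : 0 < β) :
    IntervalIntegrable (fun s : ℝ => C * s ^ (β - 1)) volume 0 1 :=
  (intervalIntegral.intervalIntegrable_rpow' (by linarith)).const_mul C

lemma intervalIntegrable_scaled_quotient {g : ℝ → ℝ} {x b C β : ℝ} (hxb : x ≤ b) (hβ : 0 < β)
    (hc : ContinuousOn g (Icc x b)) (hg : ∀ t ∈ Icc x b, |g t - g x| ≤ C * |t - x| ^ β) :
    IntervalIntegrable (fun s => (g (x + (b - x) * s) - g x) / s) volume 0 1 := by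
  refine (intervalIntegrable_holder_bound (C * (b - x) ^ β) hβ).mono_fun'
    (aestronglyMeasurable_scaled_quotient hxb hc) ?_
  rw [uIoc_of_le zero_le_one]
  filter_upwards [ae_restrict_mem measurableSet_Ioc] with s hs
  exact abs_scaled_quotient_le hxb hg hs

lemma hasPF1Upper_finitePart {g : ℝ → ℝ} {x b C β : ℝ} (hxb : x < b) (hβ : 0 < β)
    (hc : ContinuousOn g (Icc x b)) (hg : ∀ t ∈ Icc x b, |g t - g x| ≤ C * |t - x| ^ β) :
    HasPF1Upper g x b (finitePart g x b) := by
  set k : ℝ → ℝ := fun s => (g (x + (b - x) * s) - g x) / s with hk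
  have hki : IntervalIntegrable k volume 0 1 :=
    intervalIntegrable_scaled_quotient hxb.le hβ hc hg
  have hc0 : 0 < b - x := sub_pos.2 hxb
  have hlim : Tendsto (fun ε : ℝ => (∫ s in (0 : ℝ)..1, k s) - (∫ s in (0 : ℝ)..(ε / (b - x)), k s)
      + g x * Real.log (b - x)) (𝓝[>] 0) (𝓝 (finitePart g x b)) := by
    have h0 : Tendsto (fun u : ℝ => ∫ s in (0 : ℝ)..u, k s) (𝓝[Icc 0 1] 0) (𝓝 0) := by
      have := (intervalIntegral.continuousOn_primitive_interval' hki left_mem_uIcc) 0 left_mem_uIcc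
      rw [uIcc_of_le zero_le_one] at this
      simpa [ContinuousWithinAt] using this
    have h1 : Tendsto (fun ε : ℝ => ε / (b - x)) (𝓝[>] 0) (𝓝[Icc 0 1] 0) := by
      refine tendsto_nhdsWithin_iff.2 ⟨?_, ?_⟩
      · have : Tendsto (fun ε : ℝ => ε / (b - x)) (𝓝 0) (𝓝 (0 / (b - x))) :=
          (continuous_id.div_const _).tendsto 0
        rw [zero_div] at this
        exact this.mono_left nhdsWithin_le_nhds
      · filter_upwards [Ioo_mem_nhdsGT hc0] with ε hε
        exact ⟨(div_pos hε.1 hc0).le, (div_le_one hc0).2 hε.2.le⟩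
    have := (tendsto_const_nhds (x := ∫ s in (0 : ℝ)..1, k s)).sub (h0.comp h1)
    simpa [finitePart, scaledIntegral, hk] using this.add_const (g x * Real.log (b - x))
  refine hlim.congr' ?_
  filter_upwards [Ioo_mem_nhdsGT hc0] with ε hε
  have hε1 : ε / (b - x) ∈ Ioo (0 : ℝ) 1 := ⟨div_pos hε.1 hc0, (div_lt_one hc0).2 hε.2⟩
  have hi0 : IntervalIntegrable k volume 0 (ε / (b - x)) := hki.mono_set (by
    rw [uIcc_of_le hε1.1.le, uIcc_of_le zero_le_one]; exact Icc_subset_Icc_right hε1.2.le)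
  have hi1 : IntervalIntegrable k volume (ε / (b - x)) 1 := hki.mono_set (by
    rw [uIcc_of_le hε1.2.le, uIcc_of_le zero_le_one]; exact Icc_subset_Icc_left hε1.1.le)
  have hsub := intervalIntegral.smul_integral_comp_add_mul (a := ε / (b - x)) (b := 1)
    (fun t => g t / (t - x)) (b - x) x
  have hinv : IntervalIntegrable (fun s : ℝ => s⁻¹) volume (ε / (b - x)) 1 := by
    refine intervalIntegral.intervalIntegrable_inv (fun s hs => ?_) continuousOn_id
    rw [uIcc_of_le hε1.2.le] at hs
    exact (hε1.1.trans_le hs.1).ne'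
  have hval : (b - x) • (∫ s in (ε / (b - x))..1, g (x + (b - x) * s) / (x + (b - x) * s - x))
      = (∫ s in (ε / (b - x))..1, k s) + g x * (Real.log (b - x) - Real.log ε) := by
    have hlog : ∫ s in (ε / (b - x))..1, s⁻¹ = Real.log (b - x) - Real.log ε := by
      rw [integral_inv_of_pos hε1.1 one_pos, one_div_div, Real.log_div hc0.ne' hε.1.ne']
    rw [← hlog, ← intervalIntegral.integral_const_mul,
      ← intervalIntegral.integral_add hi1 (hinv.const_mul _), smul_eq_mul,
      ← intervalIntegral.integral_const_mul]
    refine intervalIntegral.integral_congr fun s hs => ?_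
    rw [uIcc_of_le hε1.2.le] at hs
    have : s ≠ 0 := (hε1.1.trans_le hs.1).ne'
    simp only [hk, add_sub_cancel_left]
    field_simp
    ring
  have e1 : x + (b - x) * (ε / (b - x)) = x + ε := by field_simp
  have e2 : x + (b - x) * 1 = b := by ring
  rw [hval, e1, e2] at hsub
  rw [← hsub, ← intervalIntegral.integral_add_adjacent_intervals hi0 hi1]
  ring

lemma HasPF1Upper.hasPF2Upper {g g' : ℝ → ℝ} {x b L : ℝ} (hxb : x < b)
    (hg : ∀ t ∈ Icc x b, HasDerivWithinAt g (g' t) (Icc x b) t)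
    (hg' : ContinuousOn g' (Icc x b)) (h : HasPF1Upper g' x b L) :
    HasPF2Upper g (g' x) x b (L - g b / (b - x) + g' x) := by
  have hslope : Tendsto (fun ε : ℝ => (g (x + ε) - g x) / ε) (𝓝[>] 0) (𝓝 (g' x)) := by
    have h1 : HasDerivWithinAt g (g' x) (Ioi x) x :=
      ((hg x (left_mem_Icc.2 hxb.le)).mono Ioo_subset_Icc_self).mono_of_mem_nhdsWithin
        (Ioo_mem_nhdsGT hxb)
    have h2 := hasDerivWithinAt_iff_tendsto_slope' (self_notMem_Ioi) |>.1 h1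
    have h3 : Tendsto (fun ε : ℝ => x + ε) (𝓝[>] 0) (𝓝[>] x) := by
      refine tendsto_nhdsWithin_iff.2 ⟨?_, ?_⟩
      · have : Tendsto (fun ε : ℝ => x + ε) (𝓝 0) (𝓝 (x + 0)) :=
          (continuous_const.add continuous_id).tendsto 0
        rw [add_zero] at this
        exact this.mono_left nhdsWithin_le_nhds
      · filter_upwards [self_mem_nhdsWithin] with ε hε
        simpa using hε
    refine (h2.comp h3).congr fun ε => ?_
    simp [slope_def_field]
  refine ((h.sub_const (g b / (b - x))).add hslope).congr' ?_
  filter_upwards [Ioo_mem_nhdsGT (sub_pos.2 hxb)] with ε hε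
  have hle : x + ε ≤ b := by linarith [hε.2]
  have hsubset : Icc (x + ε) b ⊆ Icc x b := Icc_subset_Icc_left (by linarith [hε.1])
  have hne : ∀ t ∈ Icc (x + ε) b, t - x ≠ 0 := fun t ht => by
    have := ht.1; have := hε.1; intro h; linarith
  have hgc : ContinuousOn g (Icc (x + ε) b) :=
    fun t ht => ((hg t (hsubset ht)).continuousWithinAt).mono hsubset
  have hi1 : IntervalIntegrable (fun t => g' t / (t - x)) volume (x + ε) b := by
    refine ContinuousOn.intervalIntegrable ?_
    rw [uIcc_of_le hle]
    exact (hg'.mono hsubset).div (by fun_prop) hne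
  have hi2 : IntervalIntegrable (fun t => g t / (t - x) ^ 2) volume (x + ε) b := by
    refine ContinuousOn.intervalIntegrable ?_
    rw [uIcc_of_le hle]
    exact hgc.div (by fun_prop) fun t ht => pow_ne_zero 2 (hne t ht)
  have hftc := intervalIntegral.integral_eq_sub_of_hasDerivAt_of_le
    (f := fun t => g t / (t - x)) (f' := fun t => g' t / (t - x) - g t / (t - x) ^ 2) hle
    (hgc.div (by fun_prop) hne) (fun t ht => by
      have h1 : HasDerivAt g (g' t) t := (hg t (hsubset (Ioo_subset_Icc_self ht))).hasDerivAt
        (Icc_mem_nhds (by linarith [ht.1, hε.1]) ht.2)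
      have h0 := hne t (Ioo_subset_Icc_self ht)
      refine (h1.div ((hasDerivAt_id t).sub_const x) h0).congr_deriv ?_
      simp only [id]
      field_simp) (hi1.sub hi2)
  rw [intervalIntegral.integral_sub hi1 hi2, add_sub_cancel_left] at hftc
  linear_combination hftc

lemma abs_apply_sub_le_rpow_one {g g' : ℝ → ℝ} {x b M : ℝ}
    (hg : ∀ t ∈ Icc x b, HasDerivWithinAt g (g' t) (Icc x b) t)
    (hM : ∀ t ∈ Icc x b, |g' t| ≤ M) :
    ∀ t ∈ Icc x b, |g t - g x| ≤ M * |t - x| ^ (1 : ℝ) := by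
  intro t ht
  rw [Real.rpow_one]
  exact (convex_Icc x b).norm_image_sub_le_of_norm_hasDerivWithin_le hg hM
    (left_mem_Icc.2 (ht.1.trans ht.2)) ht

lemma continuousOn_diagonal {G : ℝ → ℝ → ℝ} {a b : ℝ}
    (hc : ContinuousOn (fun p : ℝ × ℝ => G p.1 p.2) (Icc a b ×ˢ Icc a b)) :
    ContinuousOn (fun x => G x x) (Icc a b) :=
  hc.comp (f := fun x : ℝ => (x, x)) (by fun_prop) fun _ hx => ⟨hx, hx⟩

lemma continuousOn_section {G : ℝ → ℝ → ℝ} {a b x : ℝ}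
    (hc : ContinuousOn (fun p : ℝ × ℝ => G p.1 p.2) (Icc a b ×ˢ Icc a b)) (hx : x ∈ Icc a b) :
    ContinuousOn (G x) (Icc x b) :=
  hc.comp (f := fun t : ℝ => (x, t)) (by fun_prop) fun _ ht => ⟨hx, hx.1.trans ht.1, ht.2⟩

lemma abs_scaled_quotient_le_of_mem {g : ℝ → ℝ} {a x b C β s : ℝ} (hβ : 0 < β) (hC : 0 ≤ C)
    (hx : x ∈ Icc a b) (hg : ∀ t ∈ Icc a b, |g t - g x| ≤ C * |t - x| ^ β)
    (hs : s ∈ Ioc (0 : ℝ) 1) :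
    |(g (x + (b - x) * s) - g x) / s| ≤ C * (b - a) ^ β * s ^ (β - 1) := by
  refine (abs_scaled_quotient_le hx.2 (fun t ht => hg t ⟨hx.1.trans ht.1, ht.2⟩) hs).trans ?_
  have := hs.1.le
  have := sub_nonneg.2 hx.2
  have := hx.1
  gcongr

lemma continuousOn_scaledIntegral {G : ℝ → ℝ → ℝ} {a b C β : ℝ} (hβ : 0 < β) (hC : 0 ≤ C)
    (hc : ContinuousOn (fun p : ℝ × ℝ => G p.1 p.2) (Icc a b ×ˢ Icc a b))
    (hG : ∀ x ∈ Icc a b, ∀ t ∈ Icc a b, |G x t - G x x| ≤ C * |t - x| ^ β) :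
    ContinuousOn (fun x => scaledIntegral (G x) x b) (Icc a b) := by
  intro x₀ hx₀
  refine intervalIntegral.continuousWithinAt_of_dominated_interval
    (bound := fun s => C * (b - a) ^ β * s ^ (β - 1)) ?_ ?_ (intervalIntegrable_holder_bound _ hβ) ?_
  · filter_upwards [self_mem_nhdsWithin] with x hx
    exact aestronglyMeasurable_scaled_quotient hx.2 (continuousOn_section hc hx)
  · filter_upwards [self_mem_nhdsWithin] with x hx
    refine ae_of_all _ fun s hs => ?_
    rw [uIoc_of_le zero_le_one] at hs
    exact abs_scaled_quotient_le_of_mem hβ hC hx (hG x hx) hs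
  · refine ae_of_all _ fun s hs => ?_
    rw [uIoc_of_le zero_le_one] at hs
    refine ContinuousOn.continuousWithinAt (s := Icc a b) ?_ hx₀
    refine ContinuousOn.div_const (ContinuousOn.sub ?_ (continuousOn_diagonal hc)) s
    refine hc.comp (f := fun x : ℝ => (x, x + (b - x) * s)) (by fun_prop) fun x hx => ⟨hx, ?_⟩
    have := add_sub_mul_mem_Icc hx.2 (Ioc_subset_Icc_self hs)
    exact ⟨hx.1.trans this.1, this.2⟩

lemma integrableOn_finitePart {G : ℝ → ℝ → ℝ} {a b C β : ℝ} (hβ : 0 < β) (hC : 0 ≤ C)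
    (hc : ContinuousOn (fun p : ℝ × ℝ => G p.1 p.2) (Icc a b ×ˢ Icc a b))
    (hG : ∀ x ∈ Icc a b, ∀ t ∈ Icc a b, |G x t - G x x| ≤ C * |t - x| ^ β)
    (hlog : IntegrableOn (fun x => Real.log (b - x) * G x x) (Ioo a b)) :
    IntegrableOn (fun x => finitePart (G x) x b) (Ioo a b) := by
  refine Integrable.add ?_ (by simpa only [IntegrableOn, mul_comm] using hlog)
  exact ((continuousOn_scaledIntegral hβ hC hc hG).integrableOn_compact isCompact_Icc).mono_set
    Ioo_subset_Icc_self

lemma integrableOn_log_sub_mul {u : ℝ → ℝ} {a b : ℝ} (hab : a ≤ b)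
    (hu : ContinuousOn u (Icc a b)) :
    IntegrableOn (fun x => Real.log (b - x) * u x) (Ioo a b) := by
  have h1 : IntervalIntegrable (fun x => Real.log (b - x)) volume a b := by
    simpa using (intervalIntegral.intervalIntegrable_log' (a := b - a) (b := 0)).comp_sub_left b
  have h2 := h1.mul_continuousOn (g := u) (by rwa [uIcc_of_le hab])
  rw [intervalIntegrable_iff_integrableOn_Ioo_of_le hab] at h2
  exact h2

/-- Chain rule along a curve in the interior of a square, from continuous partial derivatives. -/
lemma hasDerivAt_comp_of_partial {f fx ft : ℝ → ℝ → ℝ} {a b : ℝ}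
    (hdx : ∀ x ∈ Icc a b, ∀ t ∈ Icc a b,
      HasDerivWithinAt (fun y => f y t) (fx x t) (Icc a b) x)
    (hdt : ∀ x ∈ Icc a b, ∀ t ∈ Icc a b,
      HasDerivWithinAt (fun s => f x s) (ft x t) (Icc a b) t)
    (hfxc : ContinuousOn (fun p : ℝ × ℝ => fx p.1 p.2) (Icc a b ×ˢ Icc a b))
    (hftc : ContinuousOn (fun p : ℝ × ℝ => ft p.1 p.2) (Icc a b ×ˢ Icc a b))
    {u v : ℝ → ℝ} {u' v' x : ℝ} (hu : HasDerivAt u u' x) (hv : HasDerivAt v v' x)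
    (hux : u x ∈ Ioo a b) (hvx : v x ∈ Ioo a b) :
    HasDerivAt (fun y => f (u y) (v y)) (fx (u x) (v x) * u' + ft (u x) (v x) * v') x := by
  have hmem : Ioo a b ×ˢ Ioo a b ∈ 𝓝 (u x, v x) :=
    prod_mem_nhds (Ioo_mem_nhds hux.1 hux.2) (Ioo_mem_nhds hvx.1 hvx.2)
  have hmem' : Icc a b ×ˢ Icc a b ∈ 𝓝 (u x, v x) :=
    mem_of_superset hmem (prod_mono Ioo_subset_Icc_self Ioo_subset_Icc_self)
  have hF := hasStrictFDerivAt_uncurry_coprod (𝕜 := ℝ) (u := (u x, v x)) (f := f)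
    (f₁ := fun x t => ContinuousLinearMap.toSpanSingleton ℝ (fx x t))
    (f₂ := fun x t => ContinuousLinearMap.toSpanSingleton ℝ (ft x t))
    (by
      filter_upwards [hmem] with p hp
      exact ((hdx p.1 (Ioo_subset_Icc_self hp.1) p.2 (Ioo_subset_Icc_self hp.2)).hasDerivAt
        (Icc_mem_nhds hp.1.1 hp.1.2)).hasFDerivAt)
    (by
      filter_upwards [hmem] with p hp
      exact ((hdt p.1 (Ioo_subset_Icc_self hp.1) p.2 (Ioo_subset_Icc_self hp.2)).hasDerivAt
        (Icc_mem_nhds hp.2.1 hp.2.2)).hasFDerivAt)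
    ((ContinuousLinearMap.toSpanSingletonCLE (𝕜 := ℝ) (E := ℝ)).continuous.continuousAt.comp
      (hfxc.continuousAt hmem'))
    ((ContinuousLinearMap.toSpanSingletonCLE (𝕜 := ℝ) (E := ℝ)).continuous.continuousAt.comp
      (hftc.continuousAt hmem'))
  refine (hF.hasFDerivAt.comp_hasDerivAt x (hu.prodMk hv)).congr_deriv ?_
  simp [Function.HasUncurry.uncurry, mul_comm]

lemma hasDerivAt_finitePart {f fx ft : ℝ → ℝ → ℝ} {a b C β : ℝ} (hβ : 0 < β) (hC : 0 ≤ C)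
    (hf : ContinuousOn (fun p : ℝ × ℝ => f p.1 p.2) (Icc a b ×ˢ Icc a b))
    (hdx : ∀ x ∈ Icc a b, ∀ t ∈ Icc a b,
      HasDerivWithinAt (fun y => f y t) (fx x t) (Icc a b) x)
    (hdt : ∀ x ∈ Icc a b, ∀ t ∈ Icc a b,
      HasDerivWithinAt (fun s => f x s) (ft x t) (Icc a b) t)
    (hfxc : ContinuousOn (fun p : ℝ × ℝ => fx p.1 p.2) (Icc a b ×ˢ Icc a b))
    (hftc : ContinuousOn (fun p : ℝ × ℝ => ft p.1 p.2) (Icc a b ×ˢ Icc a b))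
    (hx : ∀ x ∈ Icc a b, ∀ t ∈ Icc a b, |fx x t - fx x x| ≤ C * |t - x| ^ β)
    (ht : ∀ x ∈ Icc a b, ∀ t ∈ Icc a b, |ft x t - ft x x| ≤ C * |t - x| ^ β)
    {M : ℝ} (hM : ∀ x ∈ Icc a b, ∀ t ∈ Icc a b, |ft x t| ≤ M)
    {x₀ : ℝ} (hx₀ : x₀ ∈ Ioo a b) :
    HasDerivAt (fun x => finitePart (f x) x b)
      (finitePart (fx x₀) x₀ b + finitePart (ft x₀) x₀ b - f x₀ b / (b - x₀)) x₀ := by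
  have hsq : ∀ x ∈ Ioo a b, ∀ s ∈ Ioo (0 : ℝ) 1, x + (b - x) * s ∈ Ioo a b := by
    intro x hx s hs
    have h1 := mul_pos (sub_pos.2 hx.2) hs.1
    have h2 := mul_pos (sub_pos.2 hx.2) (sub_pos.2 hs.2)
    constructor <;> nlinarith [hx.1, hx.2]
  have hx₀' := Ioo_subset_Icc_self hx₀
  have hc0 : 0 < b - x₀ := sub_pos.2 hx₀.2
  have hsec : ∀ (g : ℝ → ℝ → ℝ), (∀ x ∈ Icc a b, ∀ t ∈ Icc a b, |g x t - g x x| ≤ C * |t - x| ^ β) →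
      ∀ t ∈ Icc x₀ b, |g x₀ t - g x₀ x₀| ≤ C * |t - x₀| ^ β :=
    fun g hg t ht => hg x₀ hx₀' t ⟨hx₀'.1.trans ht.1, ht.2⟩
  have hix := intervalIntegrable_scaled_quotient hx₀.2.le hβ (continuousOn_section hfxc hx₀')
    (hsec fx hx)
  have hit := intervalIntegrable_scaled_quotient hx₀.2.le hβ (continuousOn_section hftc hx₀')
    (hsec ft ht)
  have hdiff : ∀ x ∈ Icc a b, ∀ t ∈ Icc x b, HasDerivWithinAt (f x) (ft x t) (Icc x b) t :=
    fun x hx t ht => (hdt x hx t ⟨hx.1.trans ht.1, ht.2⟩).mono (Icc_subset_Icc_left hx.1)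
  have hif := intervalIntegrable_scaled_quotient hx₀.2.le one_pos (continuousOn_section hf hx₀')
    (abs_apply_sub_le_rpow_one (hdiff x₀ hx₀')
      fun t ht => hM x₀ hx₀' t ⟨hx₀'.1.trans ht.1, ht.2⟩)
  have hcomp : ContinuousOn (fun s => ft x₀ (x₀ + (b - x₀) * s)) (Icc 0 1) :=
    (continuousOn_section hftc hx₀').comp (by fun_prop) fun s hs => add_sub_mul_mem_Icc hx₀.2.le hs
  have hir : IntervalIntegrable (fun s => ft x₀ (x₀ + (b - x₀) * s)) volume 0 1 :=
    ContinuousOn.intervalIntegrable (by rwa [uIcc_of_le zero_le_one])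
  have hI := hix.add hit |>.sub hir
  have hne1 : ∀ᵐ s : ℝ, s ≠ 1 := by simp [ae_iff]
  have hmain := (intervalIntegral.hasDerivAt_integral_of_dominated_loc_of_deriv_le
    (F := fun x s => (f x (x + (b - x) * s) - f x x) / s)
    (F' := fun x s => (fx x (x + (b - x) * s) - fx x x) / s
      + (ft x (x + (b - x) * s) - ft x x) / s - ft x (x + (b - x) * s))
    (bound := fun s => C * (b - a) ^ β * s ^ (β - 1) + C * (b - a) ^ β * s ^ (β - 1) + M)
    (a := 0) (b := 1) (μ := volume) (Ioo_mem_nhds hx₀.1 hx₀.2)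
    (by
      filter_upwards [Ioo_mem_nhds hx₀.1 hx₀.2] with x hx
      exact aestronglyMeasurable_scaled_quotient hx.2.le
        (continuousOn_section hf (Ioo_subset_Icc_self hx)))
    hif
    (by
      have := hI.aestronglyMeasurable
      rw [uIoc_of_le zero_le_one]
      exact this)
    (by
      refine ae_of_all _ fun s hs x hx' => ?_
      rw [uIoc_of_le zero_le_one] at hs
      have hx'' := Ioo_subset_Icc_self hx'
      have hy := add_sub_mul_mem_Icc hx'.2.le (Ioc_subset_Icc_self hs)
      refine (norm_sub_le _ _).trans (add_le_add ((norm_add_le _ _).trans (add_le_add ?_ ?_)) ?_)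
      · exact abs_scaled_quotient_le_of_mem hβ hC hx'' (hx x hx'') hs
      · exact abs_scaled_quotient_le_of_mem hβ hC hx'' (ht x hx'') hs
      · exact hM x hx'' _ ⟨hx'.1.le.trans hy.1, hy.2⟩)
    (((intervalIntegrable_holder_bound _ hβ).add (intervalIntegrable_holder_bound _ hβ)).add
      intervalIntegrable_const)
    (by
      filter_upwards [hne1] with s hs1 hs x hx'
      rw [uIoc_of_le zero_le_one] at hs
      have hs' : s ∈ Ioo (0 : ℝ) 1 := ⟨hs.1, lt_of_le_of_ne hs.2 hs1⟩
      have hlin : HasDerivAt (fun y : ℝ => y + (b - y) * s) (1 + (-1) * s) x :=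
        (hasDerivAt_id x).add (((hasDerivAt_id x).const_sub b).mul_const s)
      have h1 := hasDerivAt_comp_of_partial hdx hdt hfxc hftc (hasDerivAt_id x) hlin hx'
        (hsq x hx' s hs')
      have h2 := hasDerivAt_comp_of_partial hdx hdt hfxc hftc (hasDerivAt_id x) (hasDerivAt_id x)
        hx' hx'
      refine ((h1.sub h2).div_const s).congr_deriv ?_
      have := hs.1.ne'
      simp only [id]
      field_simp
      ring)).2
  have hftc' : ∫ s in (0 : ℝ)..1, ft x₀ (x₀ + (b - x₀) * s) = (f x₀ b - f x₀ x₀) / (b - x₀) := by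
    rw [intervalIntegral.integral_comp_add_mul (ft x₀) hc0.ne' x₀, mul_zero, add_zero, mul_one,
      add_sub_cancel, intervalIntegral.integral_eq_sub_of_hasDerivAt_of_le (f := f x₀) hx₀.2.le
        (continuousOn_section hf hx₀')
        (fun t ht => (hdiff x₀ hx₀' t (Ioo_subset_Icc_self ht)).hasDerivAt
          (Icc_mem_nhds ht.1 ht.2))
        (ContinuousOn.intervalIntegrable (by
          rw [uIcc_of_le hx₀.2.le]; exact continuousOn_section hftc hx₀')), smul_eq_mul]
    ring
  rw [intervalIntegral.integral_sub (hix.add hit) hir, intervalIntegral.integral_add hix hit,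
    hftc'] at hmain
  have hdiag := hasDerivAt_comp_of_partial hdx hdt hfxc hftc (hasDerivAt_id x₀) (hasDerivAt_id x₀)
    hx₀ hx₀
  have hlog : HasDerivAt (fun x => Real.log (b - x)) (-1 / (b - x₀)) x₀ :=
    ((hasDerivAt_id x₀).const_sub b).log hc0.ne'
  refine (hmain.add (hdiag.mul hlog)).congr_deriv ?_
  simp only [finitePart, scaledIntegral, id]
  field_simp
  ring

lemma integrableOn_endpoint_quotient {f ft : ℝ → ℝ → ℝ} {a b M : ℝ}
    (hf : ContinuousOn (fun p : ℝ × ℝ => f p.1 p.2) (Icc a b ×ˢ Icc a b))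
    (hdiff : ∀ x ∈ Icc a b, ∀ t ∈ Icc x b, HasDerivWithinAt (f x) (ft x t) (Icc x b) t)
    (hM : ∀ x ∈ Icc a b, ∀ t ∈ Icc a b, |ft x t| ≤ M)
    (hdiag : IntegrableOn (fun x => f x x / (b - x)) (Ioo a b)) :
    IntegrableOn (fun x => f x b / (b - x)) (Ioo a b) := by
  have hrem : IntegrableOn (fun x => (f x b - f x x) / (b - x)) (Ioo a b) := by
    refine IntegrableOn.of_bound measure_Ioo_lt_top ?_ M ?_
    · have hend : ContinuousOn (fun x => f x b) (Ioo a b) :=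
        hf.comp (f := fun x : ℝ => (x, b)) (by fun_prop) fun x hx =>
          ⟨Ioo_subset_Icc_self hx, (hx.1.trans hx.2).le, le_rfl⟩
      have hquot : ContinuousOn (fun x => (f x b - f x x) / (b - x)) (Ioo a b) :=
        (hend.sub ((continuousOn_diagonal hf).mono Ioo_subset_Icc_self)).div (by fun_prop)
          fun x hx => (sub_pos.2 hx.2).ne'
      exact hquot.aestronglyMeasurable measurableSet_Ioo
    · filter_upwards [ae_restrict_mem measurableSet_Ioo] with x hx
      have hx' := Ioo_subset_Icc_self hx
      have h := abs_apply_sub_le_rpow_one (hdiff x hx')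
        (fun t ht => hM x hx' t ⟨hx'.1.trans ht.1, ht.2⟩) b (right_mem_Icc.2 hx'.2)
      have h0 : 0 < b - x := sub_pos.2 hx.2
      rw [Real.rpow_one, abs_of_pos h0] at h
      rwa [Real.norm_eq_abs, abs_div, abs_of_pos h0, div_le_iff₀ h0]
  refine (hrem.add hdiag).congr_fun (fun x _ => ?_) measurableSet_Ioo
  simp only [Pi.add_apply]
  ring

/-- Integration by parts against a test function supported in an open set. -/
lemma setIntegral_mul_deriv_eq_neg {u u' φ : ℝ → ℝ} {S : Set ℝ}
    (hu : ∀ x ∈ S, HasDerivAt u (u' x) x) (hui : IntegrableOn u S) (hui' : IntegrableOn u' S)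
    (hφ : ContDiff ℝ 1 φ) (hφc : HasCompactSupport φ) (hφS : tsupport φ ⊆ S) :
    ∫ x in S, u x * deriv φ x = - ∫ x in S, u' x * φ x := by
  have hsupp : ∀ (v ψ : ℝ → ℝ), Function.support ψ ⊆ tsupport φ →
      Function.support (fun x => v x * ψ x) ⊆ S := fun v ψ hψ =>
    (Function.support_mul_subset_right v ψ).trans (hψ.trans hφS)
  have hint : ∀ (v ψ : ℝ → ℝ), IntegrableOn v S → Continuous ψ → Function.support ψ ⊆ tsupport φ →
      Integrable (fun x => v x * ψ x) := by
    intro v ψ hv hψ hsub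
    rw [← integrableOn_iff_integrable_of_support_subset (hsupp v ψ hsub)]
    have hψc : HasCompactSupport ψ := hφc.mono' hsub
    obtain ⟨C, hC⟩ := hψc.exists_bound_of_continuous hψ
    exact Integrable.mul_bdd hv hψ.aestronglyMeasurable (ae_of_all _ hC)
  have hd := support_deriv_subset (f := φ)
  rw [setIntegral_eq_integral_of_forall_compl_eq_zero
      fun x hx => Function.notMem_support.1 fun h => hx (hsupp u _ hd h),
    setIntegral_eq_integral_of_forall_compl_eq_zero
      fun x hx => Function.notMem_support.1 fun h => hx (hsupp u' _ (subset_tsupport φ) h)]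
  exact integral_mul_deriv_eq_deriv_mul_of_integrable (fun x hx => hu x (hφS hx))
    (fun x _ => (hφ.differentiable one_ne_zero x).hasDerivAt)
    (hint u _ hui (hφ.continuous_deriv le_rfl) hd)
    (hint u' _ hui' hφ.continuous (subset_tsupport φ))
    (hint u _ hui hφ.continuous (subset_tsupport φ))

/-- for `f ∈ C^{1+α}([a,b]²)` (partial derivatives `fx = ∂f/∂x`,
`ft = ∂f/∂t`, both `α`-Hölder), if `F₁(x)=f(x,x)/(b−x)`, `F₂(x)=log(b−x)·ft(x,x)`,
`F₃(x)=log(b−x)·fx(x,x)` are integrable on `(a,b)`, then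
`Hf(x) = p.f.∫_x^b f(x,t)/(t−x) dt` and
`h(x) = p.f.∫_x^b f(x,t)/(t−x)² dt + p.f.∫_x^b fx(x,t)/(t−x) dt − ft(x,x)`
are integrable on `(a,b)` and `h` is the weak derivative of `Hf`:
`∫ Hf·φ' = −∫ h·φ` for all test functions `φ ∈ C₀^∞((a,b))`. -/
theorem stmt1 (a b α : ℝ) (hab : a < b) (hα : 0 < α) (hα1 : α ≤ 1)
    (f fx ft : ℝ → ℝ → ℝ) (Cα : ℝ)
    (hf : ContinuousOn (fun p : ℝ × ℝ => f p.1 p.2) (Set.Icc a b ×ˢ Set.Icc a b))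
    (hdx : ∀ x ∈ Set.Icc a b, ∀ t ∈ Set.Icc a b,
      HasDerivWithinAt (fun y => f y t) (fx x t) (Set.Icc a b) x)
    (hdt : ∀ x ∈ Set.Icc a b, ∀ t ∈ Set.Icc a b,
      HasDerivWithinAt (fun s => f x s) (ft x t) (Set.Icc a b) t)
    (hfxc : ContinuousOn (fun p : ℝ × ℝ => fx p.1 p.2) (Set.Icc a b ×ˢ Set.Icc a b))
    (hftc : ContinuousOn (fun p : ℝ × ℝ => ft p.1 p.2) (Set.Icc a b ×ˢ Set.Icc a b))
    (hxholder : ∀ x₁ ∈ Set.Icc a b, ∀ t₁ ∈ Set.Icc a b, ∀ x₂ ∈ Set.Icc a b, ∀ t₂ ∈ Set.Icc a b,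
      |fx x₁ t₁ - fx x₂ t₂| ≤ Cα * (|x₁ - x₂| ^ α + |t₁ - t₂| ^ α))
    (htholder : ∀ x₁ ∈ Set.Icc a b, ∀ t₁ ∈ Set.Icc a b, ∀ x₂ ∈ Set.Icc a b, ∀ t₂ ∈ Set.Icc a b,
      |ft x₁ t₁ - ft x₂ t₂| ≤ Cα * (|x₁ - x₂| ^ α + |t₁ - t₂| ^ α))
    (hF₁ : IntegrableOn (fun x => f x x / (b - x)) (Set.Ioo a b))
    (hF₂ : IntegrableOn (fun x => Real.log (b - x) * ft x x) (Set.Ioo a b))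
    (hF₃ : IntegrableOn (fun x => Real.log (b - x) * fx x x) (Set.Ioo a b)) :
    ∃ Hf h : ℝ → ℝ,
      (∀ x ∈ Set.Ioo a b, HasPF1Upper (fun t => f x t) x b (Hf x)) ∧
      (∀ x ∈ Set.Ioo a b, ∃ L₂ L₁ : ℝ,
        HasPF2Upper (fun t => f x t) (ft x x) x b L₂ ∧
        HasPF1Upper (fun t => fx x t) x b L₁ ∧
        h x = L₂ + L₁ - ft x x) ∧
      IntegrableOn Hf (Set.Ioo a b) ∧ IntegrableOn h (Set.Ioo a b) ∧
      ∀ φ : ℝ → ℝ, ContDiff ℝ (⊤ : ℕ∞) φ → tsupport φ ⊆ Set.Ioo a b →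
        ∫ x in Set.Ioo a b, Hf x * deriv φ x = - ∫ x in Set.Ioo a b, h x * φ x := by
  have hholder : ∀ G : ℝ → ℝ → ℝ,
      (∀ x₁ ∈ Icc a b, ∀ t₁ ∈ Icc a b, ∀ x₂ ∈ Icc a b, ∀ t₂ ∈ Icc a b,
        |G x₁ t₁ - G x₂ t₂| ≤ Cα * (|x₁ - x₂| ^ α + |t₁ - t₂| ^ α)) →
      ∀ x ∈ Icc a b, ∀ t ∈ Icc a b, |G x t - G x x| ≤ |Cα| * |t - x| ^ α := by
    intro G hG x hx t ht
    have h := hG x hx t ht x hx x hx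
    rw [sub_self, abs_zero, Real.zero_rpow hα.ne', zero_add] at h
    exact h.trans (by gcongr; exact le_abs_self _)
  have hx := hholder fx hxholder
  have ht := hholder ft htholder
  obtain ⟨M, hM⟩ : ∃ M, ∀ x ∈ Icc a b, ∀ t ∈ Icc a b, |ft x t| ≤ M := by
    obtain ⟨M, hM⟩ := (isCompact_Icc.prod isCompact_Icc).exists_bound_of_continuousOn hftc
    exact ⟨M, fun x hx t ht => hM (x, t) ⟨hx, ht⟩⟩
  have hM0 : 0 ≤ M :=
    (abs_nonneg _).trans (hM a (left_mem_Icc.2 hab.le) a (left_mem_Icc.2 hab.le))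
  have hdiff : ∀ x ∈ Icc a b, ∀ t ∈ Icc x b, HasDerivWithinAt (f x) (ft x t) (Icc x b) t :=
    fun x hx t ht => (hdt x hx t ⟨hx.1.trans ht.1, ht.2⟩).mono (Icc_subset_Icc_left hx.1)
  have hflip : ∀ x ∈ Icc a b, ∀ t ∈ Icc a b, |f x t - f x x| ≤ M * |t - x| ^ (1 : ℝ) := by
    intro x hx t ht
    rw [Real.rpow_one]
    exact (convex_Icc a b).norm_image_sub_le_of_norm_hasDerivWithin_le (hdt x hx) (hM x hx) hx ht
  have hsec : ∀ {G : ℝ → ℝ → ℝ} {C β x : ℝ},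
      (∀ x ∈ Icc a b, ∀ t ∈ Icc a b, |G x t - G x x| ≤ C * |t - x| ^ β) → x ∈ Icc a b →
      ∀ t ∈ Icc x b, |G x t - G x x| ≤ C * |t - x| ^ β :=
    fun hG hx t ht => hG _ hx t ⟨hx.1.trans ht.1, ht.2⟩
  have hHint : IntegrableOn (fun x => finitePart (f x) x b) (Ioo a b) :=
    integrableOn_finitePart one_pos hM0 hf hflip
      (integrableOn_log_sub_mul hab.le (continuousOn_diagonal hf))
  have hhint : IntegrableOn (fun x => finitePart (fx x) x b + finitePart (ft x) x b
      - f x b / (b - x)) (Ioo a b) :=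
    ((integrableOn_finitePart hα (abs_nonneg _) hfxc hx hF₃).add
      (integrableOn_finitePart hα (abs_nonneg _) hftc ht hF₂)).sub
      (integrableOn_endpoint_quotient hf hdiff hM hF₁)
  refine ⟨fun x => finitePart (f x) x b,
    fun x => finitePart (fx x) x b + finitePart (ft x) x b - f x b / (b - x), ?_, ?_,
    hHint, hhint, ?_⟩
  · intro x hx
    have hx' := Ioo_subset_Icc_self hx
    exact hasPF1Upper_finitePart hx.2 one_pos (continuousOn_section hf hx') (hsec hflip hx')
  · intro x hx₀
    have hx' := Ioo_subset_Icc_self hx₀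
    exact ⟨_, _, (hasPF1Upper_finitePart hx₀.2 hα (continuousOn_section hftc hx')
        (hsec ht hx')).hasPF2Upper hx₀.2 (hdiff x hx') (continuousOn_section hftc hx'),
      hasPF1Upper_finitePart hx₀.2 hα (continuousOn_section hfxc hx') (hsec hx hx'), by ring⟩
  · intro φ hφ hφS
    exact setIntegral_mul_deriv_eq_neg
      (fun x hx₀ => hasDerivAt_finitePart hα (abs_nonneg _) hf hdx hdt hfxc hftc hx ht hM hx₀)
      hHint hhint (hφ.of_le (by exact_mod_cast le_top))
      (isCompact_Icc.of_isClosed_subset (isClosed_tsupport φ) (hφS.trans Ioo_subset_Icc_self)) hφS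
end
end

section
/- Let f ∈ C(Ḡ, C^α(I²)) for some α > 0. Then for every x ∈ Ḡ all the inner Hadamard finite part integrals exist, the functions E ↦ p.f.∫_E^{E_m} f(x,E',E)/(E'−E) dE' and E' ↦ p.f.∫_{E₀}^{E'} f(x,E',E)/(E'−E) dE are integrable on I, and ∫_I ( p.f.∫_E^{E_m} f(x,E',E)/(E'−E) dE' ) dE = ∫_I ( p.f.∫_{E₀}^{E'} f(x,E',E)/(E'−E) dE ) dE'. -/
open MeasureTheory Filter Set
open scoped Topology

noncomputable section

abbrev E3 : Type := EuclideanSpace ℝ (Fin 3)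

/-- Hadamard finite part of order 1 with lower limit `a`:
`p.f.∫_a^x g(t)/(x−t) dt = L` means
`lim_{ε→0⁺} ( ∫_a^{x−ε} g(t)/(x−t) dt + g(x)·log ε ) = L`. -/
def HasPF1Lower (g : ℝ → ℝ) (a x L : ℝ) : Prop :=
  Tendsto (fun ε : ℝ => (∫ t in a..(x - ε), g t / (x - t)) + g x * Real.log ε)
    (𝓝[>] (0 : ℝ)) (𝓝 L)

/-- The Cauchy kernel `s ↦ 1 / s` cut off to the half-line `s > ε`. -/
def cutoffInv (ε s : ℝ) : ℝ := if ε < s then s⁻¹ else 0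

lemma measurable_cutoffInv (ε : ℝ) : Measurable (cutoffInv ε) :=
  Measurable.ite measurableSet_Ioi measurable_inv measurable_const

lemma abs_cutoffInv_le {ε : ℝ} (hε : 0 < ε) (s : ℝ) : |cutoffInv ε s| ≤ ε⁻¹ := by
  unfold cutoffInv
  split_ifs with h
  · rw [abs_of_pos (inv_pos.2 (hε.trans h))]
    exact inv_anti₀ hε h.le
  · simpa using hε.le

lemma integral_mul_cutoffInv (h : ℝ → ℝ) {a b x ε : ℝ} (hax : a ≤ x) (hxb : x ≤ b) (hε : 0 < ε) :
    ∫ t in a..b, h t * cutoffInv ε (t - x) = ∫ t in Ioc (x + ε) b, h t / (t - x) := by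
  have hind : (fun t => h t * cutoffInv ε (t - x))
      = (Ioi (x + ε)).indicator (fun t => h t / (t - x)) := by
    ext t
    by_cases ht : x + ε < t
    · rw [indicator_of_mem (by exact ht), cutoffInv, if_pos (by linarith), div_eq_mul_inv]
    · rw [indicator_of_notMem (by exact ht), cutoffInv, if_neg (by linarith), mul_zero]
  rw [intervalIntegral.integral_of_le (hax.trans hxb), hind,
    setIntegral_indicator measurableSet_Ioi, Ioc_inter_Ioi, max_eq_right (by linarith)]

lemma intervalIntegrable_hoelder_quotient {h : ℝ → ℝ} {x b C α : ℝ} (hα : 0 < α) (hxb : x < b)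
    (hc : ContinuousOn h (Icc x b))
    (hH : ∀ t ∈ Icc x b, |h t - h x| ≤ C * |t - x| ^ α) :
    IntervalIntegrable (fun t => (h t - h x) / (t - x)) volume x b ∧
    ∀ ε, 0 < ε → ε ≤ b - x →
      |∫ t in (x + ε)..b, (h t - h x) / (t - x)| ≤ C * (b - x) ^ α / α := by
  have hC : 0 ≤ C := by
    have h1 := (abs_nonneg _).trans (hH b ⟨hxb.le, le_rfl⟩)
    exact nonneg_of_mul_nonneg_left h1 (Real.rpow_pos_of_pos (abs_pos.2 (by linarith)) _)
  have hpt : ∀ t ∈ Ioc x b, ‖(h t - h x) / (t - x)‖ ≤ C * (t - x) ^ (α - 1) := by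
    intro t ht
    have htx : 0 < t - x := by linarith [ht.1]
    have h1 := hH t ⟨ht.1.le, ht.2⟩
    rw [abs_of_pos htx] at h1
    rw [Real.norm_eq_abs, abs_div, abs_of_pos htx, Real.rpow_sub_one htx.ne', ← mul_div_assoc]
    gcongr
  have hint : ∀ c d, IntervalIntegrable (fun t => C * (t - x) ^ (α - 1)) volume c d := by
    intro c d
    have h1 := (intervalIntegral.intervalIntegrable_rpow' (a := c - x) (b := d - x)
      (r := α - 1) (by linarith)).comp_sub_right x
    simpa using h1.const_mul C
  constructor
  · refine (hint x b).mono_fun' ?_ ?_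
    · rw [uIoc_of_le hxb.le]
      refine ContinuousOn.aestronglyMeasurable ?_ measurableSet_Ioc
      refine ((hc.mono Ioc_subset_Icc_self).sub continuousOn_const).div (by fun_prop) ?_
      intro t ht
      linarith [ht.1]
    · rw [uIoc_of_le hxb.le]
      exact (ae_restrict_mem measurableSet_Ioc).mono hpt
  · intro ε hε hεb
    have h1 := intervalIntegral.norm_integral_le_of_norm_le (a := x + ε) (b := b) (μ := volume)
      (f := fun t => (h t - h x) / (t - x)) (g := fun t => C * (t - x) ^ (α - 1))
      (by linarith) (Eventually.of_forall fun t ht => hpt t ⟨by linarith [ht.1], ht.2⟩) (hint _ _)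
    refine h1.trans ?_
    rw [intervalIntegral.integral_const_mul,
      intervalIntegral.integral_comp_sub_right (fun s => s ^ (α - 1)),
      integral_rpow (Or.inl (by linarith)), mul_div_assoc]
    simp only [sub_add_cancel, add_sub_cancel_left]
    have := Real.rpow_nonneg hε.le α
    gcongr
    linarith

lemma integral_div_sub_eq {h : ℝ → ℝ} {x b ε : ℝ} (hε : 0 < ε) (hεb : ε ≤ b - x)
    (hq : IntervalIntegrable (fun t => (h t - h x) / (t - x)) volume x b) :
    (∫ t in (x + ε)..b, h t / (t - x)) + h x * Real.log ε
      = (∫ t in (x + ε)..b, (h t - h x) / (t - x)) + h x * Real.log (b - x) := by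
  have h1 : ∫ t in (x + ε)..b, h t / (t - x)
      = ∫ t in (x + ε)..b, ((h t - h x) / (t - x) + h x * (t - x)⁻¹) :=
    intervalIntegral.integral_congr fun t _ => by simp only [div_eq_mul_inv]; ring
  have hinv : IntervalIntegrable (fun t => h x * (t - x)⁻¹) volume (x + ε) b := by
    refine ContinuousOn.intervalIntegrable ?_
    refine continuousOn_const.mul (ContinuousOn.inv₀ (by fun_prop) ?_)
    intro t ht
    rw [uIcc_of_le (by linarith)] at ht
    linarith [ht.1]
  have hq' : IntervalIntegrable (fun t => (h t - h x) / (t - x)) volume (x + ε) b := by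
    refine hq.mono_set ?_
    rw [uIcc_of_le (by linarith), uIcc_of_le (by linarith)]
    exact Icc_subset_Icc (by linarith) le_rfl
  rw [h1, intervalIntegral.integral_add hq' hinv, intervalIntegral.integral_const_mul,
    intervalIntegral.integral_comp_sub_right (fun s => s⁻¹), add_sub_cancel_left,
    integral_inv_of_pos hε (by linarith), Real.log_div (by linarith) hε.ne']
  ring

/-- Existence of the upper finite part of a Hölder function, together with a bound on the
truncated integrals which is uniform in the truncation parameter. -/
lemma exists_hasPF1Upper {h : ℝ → ℝ} {a b x C M α : ℝ} (hα : 0 < α) (hC : 0 ≤ C)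
    (hax : a ≤ x) (hxb : x < b) (hc : ContinuousOn h (Icc a b))
    (hH : ∀ t ∈ Icc a b, |h t - h x| ≤ C * |t - x| ^ α) (hM : |h x| ≤ M) :
    ∃ L, HasPF1Upper h x b L ∧
      Tendsto (fun ε => (∫ t in a..b, h t * cutoffInv ε (t - x)) + h x * Real.log ε)
        (𝓝[>] 0) (𝓝 L) ∧
      ∀ ε ∈ Ioo (0 : ℝ) 1, |(∫ t in a..b, h t * cutoffInv ε (t - x)) + h x * Real.log ε|
        ≤ C * (b - a) ^ α / α + M * |Real.log (b - x)| := by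
  have hsub : Icc x b ⊆ Icc a b := Icc_subset_Icc_left hax
  have hx0 : 0 < b - x := by linarith
  obtain ⟨hq, hqb⟩ := intervalIntegrable_hoelder_quotient hα hxb (hc.mono hsub)
    (fun t ht => hH t (hsub ht))
  have hcut : ∀ ε, 0 < ε → ε ≤ b - x → ∫ t in a..b, h t * cutoffInv ε (t - x)
      = ∫ t in (x + ε)..b, h t / (t - x) := by
    intro ε hε hεb
    rw [integral_mul_cutoffInv h hax hxb.le hε, intervalIntegral.integral_of_le (by linarith)]
  have hev : ∀ᶠ ε in 𝓝[>] (0 : ℝ), ε ∈ Ioo 0 (b - x) := Ioo_mem_nhdsGT hx0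
  have hlim : Tendsto (fun ε => ∫ t in (x + ε)..b, (h t - h x) / (t - x)) (𝓝[>] 0)
      (𝓝 (∫ t in x..b, (h t - h x) / (t - x))) := by
    have h1 := intervalIntegral.continuousOn_primitive_interval_left
      (μ := volume) (a := x) (b := b) (f := fun t => (h t - h x) / (t - x))
      (by rwa [uIcc_of_le hxb.le, ← intervalIntegrable_iff_integrableOn_Icc_of_le hxb.le])
    have h2 := h1 x left_mem_uIcc
    refine h2.tendsto.comp (tendsto_nhdsWithin_iff.2 ⟨?_, ?_⟩)
    · have : Tendsto (fun ε : ℝ => x + ε) (𝓝 0) (𝓝 (x + 0)) :=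
        (continuous_const.add continuous_id).tendsto 0
      rw [add_zero] at this
      exact this.mono_left nhdsWithin_le_nhds
    · filter_upwards [hev] with ε hε
      rw [uIcc_of_le hxb.le]
      exact ⟨by linarith [hε.1], by linarith [hε.2]⟩
  have hPF : HasPF1Upper h x b
      ((∫ t in x..b, (h t - h x) / (t - x)) + h x * Real.log (b - x)) := by
    refine (hlim.add_const (h x * Real.log (b - x))).congr' ?_
    filter_upwards [hev] with ε hε
    exact (integral_div_sub_eq hε.1 hε.2.le hq).symm
  refine ⟨_, hPF, hPF.congr' ?_, ?_⟩
  · filter_upwards [hev] with ε hε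
    rw [hcut ε hε.1 hε.2.le]
  · intro ε hε
    by_cases hεb : ε ≤ b - x
    · rw [hcut ε hε.1 hεb, integral_div_sub_eq hε.1 hεb hq]
      refine (abs_add_le _ _).trans (add_le_add ((hqb ε hε.1 hεb).trans ?_) ?_)
      · gcongr
      · rw [abs_mul]
        gcongr
    · push Not at hεb
      rw [integral_mul_cutoffInv h hax hxb.le hε.1, Ioc_eq_empty (by linarith),
        Measure.restrict_empty, integral_zero_measure, zero_add, abs_mul]
      have h1 : |Real.log ε| ≤ |Real.log (b - x)| := by
        rw [abs_of_neg (Real.log_neg hε.1 hε.2), abs_of_neg (Real.log_neg hx0 (hεb.trans hε.2))]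
        exact neg_le_neg (Real.log_le_log hx0 hεb.le)
      have h2 : 0 ≤ C * (b - a) ^ α / α :=
        div_nonneg (mul_nonneg hC (Real.rpow_nonneg (by linarith) _)) hα.le
      have h3 : |h x| * |Real.log ε| ≤ M * |Real.log (b - x)| := by
        gcongr
        exact (abs_nonneg _).trans hM
      linarith

lemma exists_hasPF1Lower {h : ℝ → ℝ} {a b x C M α : ℝ} (hα : 0 < α) (hC : 0 ≤ C)
    (hax : a < x) (hxb : x ≤ b) (hc : ContinuousOn h (Icc a b))
    (hH : ∀ t ∈ Icc a b, |h t - h x| ≤ C * |t - x| ^ α) (hM : |h x| ≤ M) :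
    ∃ L, HasPF1Lower h a x L ∧
      Tendsto (fun ε => (∫ t in a..b, h t * cutoffInv ε (x - t)) + h x * Real.log ε)
        (𝓝[>] 0) (𝓝 L) ∧
      ∀ ε ∈ Ioo (0 : ℝ) 1, |(∫ t in a..b, h t * cutoffInv ε (x - t)) + h x * Real.log ε|
        ≤ C * (b - a) ^ α / α + M * |Real.log (x - a)| := by
  have hmem : ∀ t ∈ Icc (-b) (-a), -t ∈ Icc a b := fun t ht =>
    ⟨by linarith [ht.2], by linarith [ht.1]⟩
  obtain ⟨L, h1, h2, h3⟩ := exists_hasPF1Upper (h := fun t => h (-t)) (a := -b) (b := -a)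
    (x := -x) (M := M) hα hC (by linarith) (by linarith)
    (hc.comp continuousOn_neg hmem)
    (fun t ht => by
      have := hH (-t) (hmem t ht)
      rw [show -t - x = -(t - -x) by ring, abs_neg] at this
      simpa only [neg_neg] using this)
    (by simpa using hM)
  have hcut : ∀ ε, ∫ t in -b..-a, h (-t) * cutoffInv ε (t - -x)
      = ∫ t in a..b, h t * cutoffInv ε (x - t) := by
    intro ε
    rw [← intervalIntegral.integral_comp_neg (fun t => h (-t) * cutoffInv ε (t - -x))]
    simp only [neg_neg, sub_neg_eq_add, neg_add_eq_sub]
  have hpf : ∀ ε, ∫ t in (-x + ε)..-a, h (-t) / (t - -x)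
      = ∫ t in a..(x - ε), h t / (x - t) := by
    intro ε
    rw [show -x + ε = -(x - ε) by ring,
      ← intervalIntegral.integral_comp_neg (fun t => h (-t) / (t - -x))]
    simp only [neg_neg, sub_neg_eq_add, neg_add_eq_sub]
  simp only [HasPF1Upper, hcut, hpf, neg_neg] at h1 h2 h3
  refine ⟨L, h1, h2, fun ε hε => ?_⟩
  have := h3 ε hε
  rwa [show -a - -b = b - a by ring, show -a - -x = x - a by ring] at this

lemma integrable_and_tendsto_integral_of_dominated {X : Type*} [MeasurableSpace X] {μ : Measure X}
    {Φ : ℝ → X → ℝ} {F bound : X → ℝ} (hΦ : ∀ ε ∈ Ioo (0 : ℝ) 1, AEStronglyMeasurable (Φ ε) μ)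
    (hbound : Integrable bound μ)
    (hle : ∀ᵐ y ∂μ, ∀ ε ∈ Ioo (0 : ℝ) 1, |Φ ε y| ≤ bound y)
    (hlim : ∀ᵐ y ∂μ, Tendsto (fun ε => Φ ε y) (𝓝[>] 0) (𝓝 (F y))) :
    Integrable F μ ∧ Tendsto (fun ε => ∫ y, Φ ε y ∂μ) (𝓝[>] 0) (𝓝 (∫ y, F y ∂μ)) := by
  have hev : ∀ᶠ ε in 𝓝[>] (0 : ℝ), ε ∈ Ioo (0 : ℝ) 1 := Ioo_mem_nhdsGT one_pos
  refine ⟨?_, tendsto_integral_filter_of_dominated_convergence bound (hev.mono hΦ)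
    (hev.mono fun ε hε => hle.mono fun y hy => hy ε hε) hbound hlim⟩
  refine hbound.mono' ?_ ?_
  · have hind : ∀ ε, AEStronglyMeasurable ((Ioo (0 : ℝ) 1).indicator Φ ε) μ := by
      intro ε
      by_cases hε : ε ∈ Ioo (0 : ℝ) 1
      · simpa [indicator_of_mem hε] using hΦ ε hε
      · rw [indicator_of_notMem hε]
        exact aestronglyMeasurable_const
    refine aestronglyMeasurable_of_tendsto_ae (𝓝[>] (0 : ℝ)) hind ?_
    filter_upwards [hlim] with y hy
    refine hy.congr' ?_
    filter_upwards [hev] with ε hε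
    rw [indicator_of_mem hε]
  · filter_upwards [hle, hlim] with y hy hy'
    exact le_of_tendsto hy'.norm (hev.mono hy)

/-- Fubini for first-order finite parts of a Hölder function `g` on a square. -/
lemma hadamard_fubini {g : ℝ → ℝ → ℝ} {a b C α : ℝ} (hab : a < b) (hα : 0 < α) (hC : 0 ≤ C)
    (hg : ContinuousOn (fun p : ℝ × ℝ => g p.1 p.2) (Icc a b ×ˢ Icc a b))
    (hH : ∀ s₁ ∈ Icc a b, ∀ t₁ ∈ Icc a b, ∀ s₂ ∈ Icc a b, ∀ t₂ ∈ Icc a b,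
      |g s₁ t₁ - g s₂ t₂| ≤ C * (|s₁ - s₂| ^ α + |t₁ - t₂| ^ α)) :
    ∃ F₁ F₂ : ℝ → ℝ,
      (∀ t ∈ Ico a b, HasPF1Upper (fun s => g s t) t b (F₁ t)) ∧
      (∀ s ∈ Ioc a b, HasPF1Lower (fun t => g s t) a s (F₂ s)) ∧
      IntegrableOn F₁ (Icc a b) ∧ IntegrableOn F₂ (Icc a b) ∧
      ∫ t in Icc a b, F₁ t = ∫ s in Icc a b, F₂ s := by
  obtain ⟨M, hM⟩ := (isCompact_Icc.prod isCompact_Icc).exists_bound_of_continuousOn hg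
  have hM' : ∀ s ∈ Icc a b, ∀ t ∈ Icc a b, |g s t| ≤ M := fun s hs t ht => hM (s, t) ⟨hs, ht⟩
  have hcl : ∀ t ∈ Icc a b, ContinuousOn (fun s => g s t) (Icc a b) := fun t ht =>
    hg.comp (f := fun s => (s, t)) (by fun_prop) fun s hs => ⟨hs, ht⟩
  have hcr : ∀ s ∈ Icc a b, ContinuousOn (fun t => g s t) (Icc a b) := fun s hs =>
    hg.comp (f := fun t => (s, t)) (by fun_prop) fun t ht => ⟨hs, ht⟩
  have hupper : ∀ t, ∃ L, t ∈ Ico a b → _ := fun t => by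
    by_cases ht : t ∈ Ico a b
    · have ht' := Ico_subset_Icc_self ht
      obtain ⟨L, hL⟩ := exists_hasPF1Upper hα hC ht.1 ht.2 (hcl t ht') (fun s hs => by
        simpa [Real.zero_rpow hα.ne'] using hH s hs t ht' t ht' t ht') (hM' t ht' t ht')
      exact ⟨L, fun _ => hL⟩
    · exact ⟨0, fun h => (ht h).elim⟩
  have hlower : ∀ s, ∃ L, s ∈ Ioc a b → _ := fun s => by
    by_cases hs : s ∈ Ioc a b
    · have hs' := Ioc_subset_Icc_self hs
      obtain ⟨L, hL⟩ := exists_hasPF1Lower hα hC hs.1 hs.2 (hcr s hs') (fun t ht => by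
        simpa [Real.zero_rpow hα.ne'] using hH s hs' t ht s hs' s hs') (hM' s hs' s hs')
      exact ⟨L, fun _ => hL⟩
    · exact ⟨0, fun h => (hs h).elim⟩
  choose F₁ hF₁ using hupper
  choose F₂ hF₂ using hlower
  set μ : Measure ℝ := volume.restrict (Ioc a b) with hμ
  have hu : Integrable (fun t => g t t) μ :=
    (hg.comp (f := fun t => (t, t)) (by fun_prop) fun t ht => ⟨ht, ht⟩).integrableOn_Icc.mono_set
      Ioc_subset_Icc_self
  have hgm : AEStronglyMeasurable (fun p : ℝ × ℝ => g p.1 p.2) (μ.prod μ) := by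
    rw [hμ, Measure.prod_restrict]
    exact (hg.mono (prod_mono Ioc_subset_Icc_self Ioc_subset_Icc_self)).aestronglyMeasurable
      (measurableSet_Ioc.prod measurableSet_Ioc)
  have hae : ∀ᵐ p ∂(μ.prod μ), p ∈ Ioc a b ×ˢ Ioc a b := by
    rw [hμ, Measure.prod_restrict]
    exact ae_restrict_mem (measurableSet_Ioc.prod measurableSet_Ioc)
  have hK : ∀ ε ∈ Ioo (0 : ℝ) 1,
      Integrable (fun p : ℝ × ℝ => g p.1 p.2 * cutoffInv ε (p.1 - p.2)) (μ.prod μ) := by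
    intro ε hε
    refine Integrable.of_bound (hgm.mul ((measurable_cutoffInv ε).comp
      (measurable_fst.sub measurable_snd)).aestronglyMeasurable) (M * ε⁻¹) ?_
    filter_upwards [hae] with p hp
    rw [norm_mul]
    have h1 := hM' p.1 (Ioc_subset_Icc_self hp.1) p.2 (Ioc_subset_Icc_self hp.2)
    exact mul_le_mul h1 (abs_cutoffInv_le hε.1 _) (norm_nonneg _) ((abs_nonneg _).trans h1)
  have hlog : ∀ c, Integrable (fun t => Real.log (t - c)) μ := fun c => by
    have := (intervalIntegral.intervalIntegrable_log' (a := a - c) (b := b - c)).comp_sub_right c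
    simp only [sub_add_cancel] at this
    exact (intervalIntegrable_iff_integrableOn_Ioc_of_le hab.le).1 this
  have hlog' : Integrable (fun t => Real.log (b - t)) μ := by
    refine (hlog b).congr (Eventually.of_forall fun t => ?_)
    simp only
    rw [← Real.log_neg_eq_log, neg_sub]
  have hIoo : ∀ᵐ t ∂μ, t ∈ Ioo a b := by
    rw [hμ, ← restrict_Ioo_eq_restrict_Ioc]
    exact ae_restrict_mem measurableSet_Ioo
  obtain ⟨hI₁, hT₁⟩ := integrable_and_tendsto_integral_of_dominated (μ := μ) (F := F₁)
    (Φ := fun ε t => (∫ s, g s t * cutoffInv ε (s - t) ∂μ) + g t t * Real.log ε)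
    (bound := fun t => C * (b - a) ^ α / α + M * |Real.log (b - t)|)
    (fun ε hε => (hK ε hε).integral_prod_right.aestronglyMeasurable.add
      (hu.mul_const _).aestronglyMeasurable)
    ((integrable_const _).add (hlog'.abs.const_mul M))
    (hIoo.mono fun t ht ε hε => by
      have := (hF₁ t (Ioo_subset_Ico_self ht)).2.2 ε hε
      rwa [intervalIntegral.integral_of_le hab.le] at this)
    (hIoo.mono fun t ht => by
      have := (hF₁ t (Ioo_subset_Ico_self ht)).2.1
      simpa only [intervalIntegral.integral_of_le hab.le] using this)
  obtain ⟨hI₂, hT₂⟩ := integrable_and_tendsto_integral_of_dominated (μ := μ) (F := F₂)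
    (Φ := fun ε s => (∫ t, g s t * cutoffInv ε (s - t) ∂μ) + g s s * Real.log ε)
    (bound := fun s => C * (b - a) ^ α / α + M * |Real.log (s - a)|)
    (fun ε hε => (hK ε hε).integral_prod_left.aestronglyMeasurable.add
      (hu.mul_const _).aestronglyMeasurable)
    ((integrable_const _).add ((hlog a).abs.const_mul M))
    (hIoo.mono fun s hs ε hε => by
      have := (hF₂ s (Ioo_subset_Ioc_self hs)).2.2 ε hε
      rwa [intervalIntegral.integral_of_le hab.le] at this)
    (hIoo.mono fun s hs => by
      have := (hF₂ s (Ioo_subset_Ioc_self hs)).2.1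
      simpa only [intervalIntegral.integral_of_le hab.le] using this)
  refine ⟨F₁, F₂, fun t ht => (hF₁ t ht).1, fun s hs => (hF₂ s hs).1,
    (integrableOn_Icc_iff_integrableOn_Ioc (by finiteness)).2 hI₁,
    (integrableOn_Icc_iff_integrableOn_Ioc (by finiteness)).2 hI₂, ?_⟩
  rw [integral_Icc_eq_integral_Ioc, integral_Icc_eq_integral_Ioc]
  refine tendsto_nhds_unique hT₁ (hT₂.congr' ?_)
  filter_upwards [Ioo_mem_nhdsGT (one_pos : (0 : ℝ) < 1)] with ε hε
  rw [integral_add (hK ε hε).integral_prod_left (hu.mul_const _),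
    integral_add (hK ε hε).integral_prod_right (hu.mul_const _),
    integral_integral_swap (hK ε hε)]

/-- Fubini-type lemma for first-order Hadamard finite parts:
for `f ∈ C(Ḡ, C^α(I²))`, `I = [E₀,E_m]`, and every `x ∈ Ḡ`, all the inner finite parts
exist, both marginal functions are integrable on `I`, and
`∫_I ( p.f.∫_E^{E_m} f(x,E',E)/(E'−E) dE' ) dE
 = ∫_I ( p.f.∫_{E₀}^{E'} f(x,E',E)/(E'−E) dE ) dE'`. -/
theorem stmt2 (G : Set E3) (hGopen : IsOpen G) (hGbdd : Bornology.IsBounded G)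
    (E₀ Em α : ℝ) (hE₀ : 0 ≤ E₀) (hI : E₀ < Em) (hα : 0 < α)
    (f : E3 → ℝ → ℝ → ℝ) (C : ℝ)
    (hf : ContinuousOn (fun p : E3 × ℝ × ℝ => f p.1 p.2.1 p.2.2)
      (closure G ×ˢ Set.Icc E₀ Em ×ˢ Set.Icc E₀ Em))
    (hHolder : ∀ x ∈ closure G, ∀ E₁' ∈ Set.Icc E₀ Em, ∀ E₁ ∈ Set.Icc E₀ Em,
      ∀ E₂' ∈ Set.Icc E₀ Em, ∀ E₂ ∈ Set.Icc E₀ Em,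
      |f x E₁' E₁ - f x E₂' E₂| ≤ C * (|E₁' - E₂'| ^ α + |E₁ - E₂| ^ α)) :
    ∀ x ∈ closure G, ∃ F₁ F₂ : ℝ → ℝ,
      (∀ E ∈ Set.Ico E₀ Em, HasPF1Upper (fun E' => f x E' E) E Em (F₁ E)) ∧
      (∀ E' ∈ Set.Ioc E₀ Em, HasPF1Lower (fun E => f x E' E) E₀ E' (F₂ E')) ∧
      IntegrableOn F₁ (Set.Icc E₀ Em) ∧ IntegrableOn F₂ (Set.Icc E₀ Em) ∧
      ∫ E in Set.Icc E₀ Em, F₁ E = ∫ E' in Set.Icc E₀ Em, F₂ E' := by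
  intro x hx
  have hC : 0 ≤ C := by
    have h1 := (abs_nonneg _).trans (hHolder x hx Em ⟨hI.le, le_rfl⟩ E₀ ⟨le_rfl, hI.le⟩
      E₀ ⟨le_rfl, hI.le⟩ E₀ ⟨le_rfl, hI.le⟩)
    rw [sub_self, abs_zero, Real.zero_rpow hα.ne', add_zero] at h1
    exact nonneg_of_mul_nonneg_left h1 (Real.rpow_pos_of_pos (abs_pos.2 (by linarith)) _)
  exact hadamard_fubini hI hα hC
    (hf.comp (f := fun p : ℝ × ℝ => (x, p.1, p.2)) (by fun_prop) fun p hp => ⟨hx, hp.1, hp.2⟩)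
    (hHolder x hx)
end
end

section
/- Let α > 0 and let f ∈ C(Ḡ, C^{1+α}(I²)) (f continuous on Ḡ×I², C¹ in (E',E) with α-Hölder first derivatives, uniformly in x). Assume moreover that for each x ∈ Ḡ the function E' ↦ f(x,E_m,E')/(E_m−E') is integrable on I. Then ∫_I ( p.f.∫_E^{E_m} f(x,E',E)/(E'−E)² dE' ) dE = ∫_I ( p.f.∫_{E₀}^{E'} (∂f/∂E')(x,E',E)/(E'−E) dE ) dE' + ∫_I (∂f/∂E')(x,E',E') dE' − ∫_I f(x,E_m,E')/(E_m−E') dE'. -/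
open MeasureTheory Filter Set
open scoped Topology

noncomputable section

theorem intervalIntegral_triangle_swap {Ψ : ℝ → ℝ → ℝ} (hΨ : Continuous Ψ.uncurry) {a c : ℝ}
    (hac : a ≤ c) :
    ∫ t in a..c, ∫ s in t..c, Ψ s t = ∫ s in a..c, ∫ t in a..s, Ψ s t := by
  have hswap : ∫ t in Ioc a c, ∫ s in Ioc a c, (Ioi t).indicator (fun s => Ψ s t) s =
      ∫ s in Ioc a c, ∫ t in Ioc a c, (Ioi t).indicator (fun s => Ψ s t) s := by
    refine integral_integral_swap (f := fun t s => (Ioi t).indicator (fun s => Ψ s t) s) ?_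
    rw [Measure.prod_restrict]
    have h : IntegrableOn (fun p : ℝ × ℝ => Ψ p.2 p.1) (Ioc a c ×ˢ Ioc a c)
        (volume.prod volume) := by
      refine IntegrableOn.mono_set (t := Icc a c ×ˢ Icc a c) ?_
        (prod_mono Ioc_subset_Icc_self Ioc_subset_Icc_self)
      exact (hΨ.comp continuous_swap).continuousOn.integrableOn_compact
        (isCompact_Icc.prod isCompact_Icc)
    have hm : MeasurableSet {p : ℝ × ℝ | p.1 < p.2} := measurableSet_lt measurable_fst measurable_snd
    refine (Integrable.indicator h hm).congr (Eventually.of_forall fun p => ?_)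
    simp [indicator, Function.uncurry]
  have hleft : ∫ t in a..c, ∫ s in t..c, Ψ s t =
      ∫ t in Ioc a c, ∫ s in Ioc a c, (Ioi t).indicator (fun s => Ψ s t) s := by
    rw [intervalIntegral.integral_of_le hac]
    refine setIntegral_congr_fun measurableSet_Ioc fun t ht => ?_
    rw [intervalIntegral.integral_of_le ht.2, setIntegral_indicator measurableSet_Ioi]
    congr 2
    ext s
    simp only [mem_Ioc, mem_inter_iff, mem_Ioi] at ht ⊢
    grind
  have hright : ∫ s in a..c, ∫ t in a..s, Ψ s t =
      ∫ s in Ioc a c, ∫ t in Ioc a c, (Ioi t).indicator (fun s => Ψ s t) s := by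
    rw [intervalIntegral.integral_of_le hac]
    refine setIntegral_congr_fun measurableSet_Ioc fun s hs => ?_
    have : (fun t => (Ioi t).indicator (fun s => Ψ s t) s) =
        (Iio s).indicator (fun t => Ψ s t) := by
      ext t; simp [indicator]
    rw [intervalIntegral.integral_of_le hs.1.le, this, setIntegral_indicator measurableSet_Iio,
      integral_Ioc_eq_integral_Ioo]
    congr 2
    ext t
    simp only [mem_Ioc, mem_inter_iff, mem_Iio, mem_Ioo] at hs ⊢
    grind
  rw [hleft, hswap, hright]

theorem intervalIntegral_div_sub_eq_max (φ : ℝ → ℝ) {t ε b : ℝ} (h : t + ε ≤ b) :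
    ∫ s in (t + ε)..b, φ s / (s - t) = ∫ s in (t + ε)..b, φ s / max (s - t) ε := by
  refine intervalIntegral.integral_congr fun s hs => ?_
  rw [uIcc_of_le h] at hs
  rw [max_eq_left (by linarith [hs.1])]

theorem continuous_div_max {H : ℝ → ℝ → ℝ} (hH : Continuous H.uncurry) {ε : ℝ} (hε : 0 < ε) :
    Continuous (fun p : ℝ × ℝ => H p.1 p.2 / max (p.1 - p.2) ε) :=
  Continuous.div hH (by fun_prop) fun _ => (lt_max_of_lt_right hε).ne'

/-- Fubini on the triangle away from the diagonal. -/
theorem integral_cauchy_truncated_swap {H : ℝ → ℝ → ℝ} (hH : Continuous H.uncurry) {a b ε : ℝ}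
    (hε : 0 < ε) (hab : a + ε ≤ b) :
    ∫ t in a..(b - ε), ∫ s in (t + ε)..b, H s t / (s - t) =
      ∫ s in (a + ε)..b, ∫ t in a..(s - ε), H s t / (s - t) := by
  have h := intervalIntegral_triangle_swap (a := a) (c := b - ε)
    (Ψ := fun s t => H (s + ε) t / max (s + ε - t) ε)
    ((continuous_div_max hH hε).comp (g := fun p : ℝ × ℝ => H p.1 p.2 / max (p.1 - p.2) ε)
      (f := fun p : ℝ × ℝ => (p.1 + ε, p.2)) (by fun_prop)) (by linarith)
  have hleft : ∫ t in a..(b - ε), ∫ s in (t + ε)..b, H s t / (s - t) =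
      ∫ t in a..(b - ε), ∫ s in t..(b - ε), H (s + ε) t / max (s + ε - t) ε := by
    refine intervalIntegral.integral_congr fun t ht => ?_
    rw [uIcc_of_le (by linarith)] at ht
    rw [intervalIntegral_div_sub_eq_max _ (by linarith [ht.2]),
      intervalIntegral.integral_comp_add_right (fun s => H s t / max (s - t) ε)]
    simp
  have hright : ∫ s in (a + ε)..b, ∫ t in a..(s - ε), H s t / (s - t) =
      ∫ s in a..(b - ε), ∫ t in a..s, H (s + ε) t / max (s + ε - t) ε := by
    have := intervalIntegral.integral_comp_add_right (a := a) (b := b - ε)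
      (fun s => ∫ t in a..(s - ε), H s t / (s - t)) ε
    rw [sub_add_cancel] at this
    rw [← this]
    refine intervalIntegral.integral_congr fun s hs => ?_
    rw [uIcc_of_le (by linarith)] at hs
    simp only [add_sub_cancel_right]
    refine intervalIntegral.integral_congr fun t ht => ?_
    rw [uIcc_of_le hs.1] at ht
    rw [max_eq_left (by linarith [ht.2])]
  rw [hleft, h, hright]

/-- The finite part of `∫ s in t..b, H s t / (s - t)`. -/
def upperPF (H : ℝ → ℝ → ℝ) (b t : ℝ) : ℝ :=
  (∫ s in t..b, (H s t - H t t) / (s - t)) + H t t * Real.log (b - t)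

theorem intervalIntegrable_sub_rpow {t b r : ℝ} (hr : -1 < r) :
    IntervalIntegrable (fun s => (s - t) ^ r) volume t b := by
  simpa using (intervalIntegral.intervalIntegrable_rpow' (a := 0) (b := b - t) hr).comp_sub_right t

theorem integral_sub_rpow_sub_one {t b α : ℝ} (hα : 0 < α) :
    ∫ s in t..b, (s - t) ^ (α - 1) = (b - t) ^ α / α := by
  rw [intervalIntegral.integral_comp_sub_right (fun s => s ^ (α - 1)),
    integral_rpow (Or.inl (by linarith))]
  simp [Real.zero_rpow hα.ne']

theorem norm_diff_quotient_le {φ : ℝ → ℝ} {t s K α : ℝ} (hs : t < s)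
    (h : |φ s - φ t| ≤ K * (s - t) ^ α) :
    ‖(φ s - φ t) / (s - t)‖ ≤ K * (s - t) ^ (α - 1) := by
  have hpos : 0 < s - t := sub_pos.2 hs
  rw [norm_div, Real.norm_eq_abs, Real.norm_of_nonneg hpos.le, div_le_iff₀ hpos, mul_assoc,
    ← Real.rpow_add_one hpos.ne', sub_add_cancel]
  exact h

theorem intervalIntegrable_diff_quotient {φ : ℝ → ℝ} (hφ : Continuous φ) {t b K α : ℝ}
    (hα : 0 < α) (htb : t ≤ b) (h : ∀ s ∈ Ioc t b, |φ s - φ t| ≤ K * (s - t) ^ α) :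
    IntervalIntegrable (fun s => (φ s - φ t) / (s - t)) volume t b := by
  refine ((intervalIntegrable_sub_rpow (r := α - 1) (by linarith)).const_mul K).mono_fun' ?_ ?_
  · exact ((hφ.measurable.sub_const _).div (measurable_id.sub_const t)).aestronglyMeasurable
  · rw [uIoc_of_le htb]
    exact (ae_restrict_iff' measurableSet_Ioc).2 (Eventually.of_forall fun s hs =>
      norm_diff_quotient_le hs.1 (h s hs))

theorem truncated_eq_regularized {φ : ℝ → ℝ} (hφ : Continuous φ) {t b ε : ℝ}
    (hε : 0 < ε) (hεb : t + ε ≤ b) :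
    (∫ s in (t + ε)..b, φ s / (s - t)) + φ t * Real.log ε =
      (∫ s in (t + ε)..b, (φ s - φ t) / (s - t)) + φ t * Real.log (b - t) := by
  have hne : ∀ s ∈ uIcc (t + ε) b, s - t ≠ 0 := by
    intro s hs
    rw [uIcc_of_le hεb] at hs
    linarith [hs.1]
  have hlog : ∫ s in (t + ε)..b, φ t / (s - t) = φ t * (Real.log (b - t) - Real.log ε) := by
    rw [intervalIntegral.integral_comp_sub_right (fun s => φ t / s)]
    simp only [div_eq_mul_inv, add_sub_cancel_left]
    rw [intervalIntegral.integral_const_mul, integral_inv_of_pos hε (by linarith),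
      Real.log_div (by linarith) hε.ne']
  have hi : ∀ ψ : ℝ → ℝ, Continuous ψ →
      IntervalIntegrable (fun s => ψ s / (s - t)) volume (t + ε) b := fun ψ hψ =>
    (hψ.continuousOn.div (by fun_prop) hne).intervalIntegrable
  simp only [sub_div]
  rw [intervalIntegral.integral_sub (hi _ hφ) (hi _ continuous_const), hlog]
  ring

theorem tendsto_upperPF {H : ℝ → ℝ → ℝ} (hH : Continuous H.uncurry) {t b K α : ℝ}
    (hα : 0 < α) (htb : t < b) (h : ∀ s ∈ Ioc t b, |H s t - H t t| ≤ K * (s - t) ^ α) :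
    Tendsto (fun ε => (∫ s in (t + ε)..b, H s t / (s - t)) + H t t * Real.log ε)
      (𝓝[>] 0) (𝓝 (upperPF H b t)) := by
  have hφ : Continuous fun s => H s t := hH.comp (by fun_prop : Continuous fun s : ℝ => (s, t))
  have hint := intervalIntegrable_diff_quotient hφ hα htb.le h
  have hc := intervalIntegral.continuousOn_primitive_interval_left
    (f := fun s => (H s t - H t t) / (s - t)) (μ := volume) (a := t) (b := b)
    (by rw [uIcc_of_le htb.le, integrableOn_Icc_iff_integrableOn_Ioc]
        exact (intervalIntegrable_iff_integrableOn_Ioc_of_le htb.le).1 hint)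
  have hev : ∀ᶠ ε in 𝓝[>] (0 : ℝ), ε ∈ Ioo 0 (b - t) :=
    Ioo_mem_nhdsGT (sub_pos.2 htb)
  have hshift : Tendsto (fun ε : ℝ => t + ε) (𝓝[>] 0) (𝓝[uIcc t b] t) := by
    refine tendsto_nhdsWithin_iff.2 ⟨?_, ?_⟩
    · exact (Continuous.tendsto' (by fun_prop) 0 t (by simp)).mono_left nhdsWithin_le_nhds
    · filter_upwards [hev] with ε hε
      rw [uIcc_of_le htb.le]
      exact ⟨by linarith [hε.1], by linarith [hε.2]⟩
  have hlim := ((hc t left_mem_uIcc).tendsto.comp hshift).add_const (H t t * Real.log (b - t))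
  refine hlim.congr' ?_
  filter_upwards [hev] with ε hε
  exact (truncated_eq_regularized hφ hε.1 (by linarith [hε.2])).symm

theorem abs_truncated_le {φ : ℝ → ℝ} (hφ : Continuous φ) {t b ε K α : ℝ} (hα : 0 < α)
    (hε : 0 < ε) (hεb : t + ε ≤ b) (h : ∀ s ∈ Ioc t b, |φ s - φ t| ≤ K * (s - t) ^ α)
    (hK : 0 ≤ K) :
    ‖(∫ s in (t + ε)..b, φ s / (s - t)) + φ t * Real.log ε‖ ≤
      K * ((b - t) ^ α / α) + |φ t| * |Real.log (b - t)| := by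
  rw [truncated_eq_regularized hφ hε hεb]
  refine (norm_add_le _ _).trans (add_le_add ?_
    (by rw [norm_mul, Real.norm_eq_abs, Real.norm_eq_abs]))
  have htb : t ≤ b := by linarith
  have hi : IntervalIntegrable (fun s => K * (s - t) ^ (α - 1)) volume t b :=
    (intervalIntegrable_sub_rpow (by linarith)).const_mul K
  have hsub : uIcc (t + ε) b ⊆ uIcc t b := by
    rw [uIcc_of_le hεb, uIcc_of_le htb]
    exact Icc_subset_Icc_left (by linarith)
  calc ‖∫ s in (t + ε)..b, (φ s - φ t) / (s - t)‖
      ≤ ∫ s in (t + ε)..b, K * (s - t) ^ (α - 1) :=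
        intervalIntegral.norm_integral_le_of_norm_le hεb
          (Eventually.of_forall fun s hs => norm_diff_quotient_le (by linarith [hs.1])
            (h s ⟨by linarith [hs.1], hs.2⟩)) (hi.mono_set hsub)
    _ ≤ ∫ s in t..b, K * (s - t) ^ (α - 1) := by
        refine intervalIntegral.integral_mono_interval (by linarith) hεb le_rfl ?_ hi
        refine (ae_restrict_iff' measurableSet_Ioc).2 (Eventually.of_forall fun s hs => ?_)
        exact mul_nonneg hK (Real.rpow_nonneg (by linarith [hs.1]) _)
    _ = K * ((b - t) ^ α / α) := by
        rw [intervalIntegral.integral_const_mul, integral_sub_rpow_sub_one hα]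

theorem continuous_truncated {H : ℝ → ℝ → ℝ} (hH : Continuous H.uncurry) {ε : ℝ} (hε : 0 < ε)
    (b : ℝ) :
    Continuous fun t => (∫ s in (t + ε)..b, H s t / max (s - t) ε) + H t t * Real.log ε := by
  have hdiag : Continuous fun t => H t t := hH.comp (by fun_prop : Continuous fun t : ℝ => (t, t))
  have h := intervalIntegral.continuous_parametric_intervalIntegral_of_continuous
    (μ := volume) (a₀ := b) (f := fun t s => H s t / max (s - t) ε) (s := fun t => t + ε)
    ((continuous_div_max hH hε).comp continuous_swap) (by fun_prop)
  simp only [intervalIntegral.integral_symm b]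
  exact (h.neg.add (hdiag.mul_const _))

theorem integrableOn_truncated_bound {D : ℝ → ℝ} (hD : Continuous D) {a b K α : ℝ} (hα : 0 < α)
    (hab : a ≤ b) :
    IntegrableOn (fun t => K * ((b - t) ^ α / α) + |D t| * |Real.log (b - t)|) (Ioo a b) := by
  have hlog : IntervalIntegrable (fun t => Real.log (b - t)) volume a b := by
    simpa using (intervalIntegral.intervalIntegrable_log' (a := b - a) (b := 0)).comp_sub_left b
  have hpow : Continuous fun t : ℝ => K * ((b - t) ^ α / α) := by
    have : Continuous fun t : ℝ => (b - t) ^ α :=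
      (by fun_prop : Continuous fun t : ℝ => b - t).rpow_const fun _ => Or.inr hα.le
    fun_prop
  exact (intervalIntegrable_iff_integrableOn_Ioo_of_le hab).1
    ((hpow.intervalIntegrable _ _).add (hlog.abs.continuousOn_mul hD.abs.continuousOn))

theorem integrableOn_upperPF_and_tendsto {H : ℝ → ℝ → ℝ} (hH : Continuous H.uncurry)
    {a b K α : ℝ} (hα : 0 < α) (hab : a < b) (hK : 0 ≤ K)
    (h : ∀ t ∈ Icc a b, ∀ s ∈ Ioc t b, |H s t - H t t| ≤ K * (s - t) ^ α) :
    IntegrableOn (upperPF H b) (Icc a b) ∧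
    Tendsto (fun ε => ∫ t in a..(b - ε),
        ((∫ s in (t + ε)..b, H s t / (s - t)) + H t t * Real.log ε))
      (𝓝[>] 0) (𝓝 (∫ t in Icc a b, upperPF H b t)) := by
  have hdiag : Continuous fun t => H t t := hH.comp (by fun_prop : Continuous fun t : ℝ => (t, t))
  set F : ℝ → ℝ → ℝ := fun ε => (Iio (b - ε)).indicator
    (fun t => (∫ s in (t + ε)..b, H s t / max (s - t) ε) + H t t * Real.log ε) with hF
  have hFm : ∀ ε > 0, AEStronglyMeasurable (F ε) (volume.restrict (Ioo a b)) := fun ε hε =>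
    ((continuous_truncated hH hε b).aestronglyMeasurable).indicator measurableSet_Iio
  have hFeq : ∀ ε, ∀ t < b - ε, F ε t =
      (∫ s in (t + ε)..b, H s t / (s - t)) + H t t * Real.log ε := by
    intro ε t ht
    rw [hF, intervalIntegral_div_sub_eq_max _ (by linarith : t + ε ≤ b)]
    exact indicator_of_mem (mem_Iio.2 ht) _
  have hbound : ∀ ε > 0, ∀ t ∈ Ioo a b,
      ‖F ε t‖ ≤ K * ((b - t) ^ α / α) + |H t t| * |Real.log (b - t)| := by
    intro ε hε t ht
    by_cases htε : t < b - ε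
    · rw [hFeq ε t htε]
      exact abs_truncated_le (φ := fun s => H s t)
        (hH.comp (by fun_prop : Continuous fun s : ℝ => (s, t))) hα hε (by linarith)
        (h t (Ioo_subset_Icc_self ht)) hK
    · rw [hF]
      simp only
      rw [indicator_of_notMem (by simpa using htε), norm_zero]
      have := Real.rpow_nonneg (sub_nonneg.2 ht.2.le) α
      positivity
  have hlim : ∀ t ∈ Ioo a b, Tendsto (fun ε => F ε t) (𝓝[>] 0) (𝓝 (upperPF H b t)) := by
    intro t ht
    refine (tendsto_upperPF hH hα ht.2 (h t (Ioo_subset_Icc_self ht))).congr' ?_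
    filter_upwards [Ioo_mem_nhdsGT (sub_pos.2 ht.2)] with ε hε
    exact (hFeq ε t (by linarith [hε.2])).symm
  have hB := integrableOn_truncated_bound (K := K) hdiag hα hab.le
  have hpos : ∀ᶠ ε in 𝓝[>] (0 : ℝ), 0 < ε := self_mem_nhdsWithin
  refine ⟨?_, ?_⟩
  · rw [integrableOn_Icc_iff_integrableOn_Ioo]
    have hseq : Tendsto (fun n : ℕ => 1 / ((n : ℝ) + 1)) atTop (𝓝[>] 0) :=
      tendsto_nhdsWithin_iff.2 ⟨tendsto_one_div_add_atTop_nhds_zero_nat,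
        Eventually.of_forall fun n => by simp only [mem_Ioi]; positivity⟩
    refine hB.mono' (aestronglyMeasurable_of_tendsto_ae atTop
      (f := fun (n : ℕ) => F (1 / ((n : ℝ) + 1)))
      (fun n => hFm _ (by positivity)) ?_) ?_
    · exact (ae_restrict_iff' measurableSet_Ioo).2
        (Eventually.of_forall fun t ht => (hlim t ht).comp hseq)
    · exact (ae_restrict_iff' measurableSet_Ioo).2 (Eventually.of_forall fun t ht =>
        le_of_tendsto (hlim t ht).norm (hpos.mono fun ε hε => hbound ε hε t ht))
  · rw [integral_Icc_eq_integral_Ioo]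
    have := tendsto_integral_filter_of_dominated_convergence
      (μ := volume.restrict (Ioo a b)) (l := 𝓝[>] (0 : ℝ)) (F := F) (f := upperPF H b) _
      (hpos.mono fun ε hε => hFm ε hε)
      (hpos.mono fun ε hε => (ae_restrict_iff' measurableSet_Ioo).2
        (Eventually.of_forall fun t ht => hbound ε hε t ht)) hB
      ((ae_restrict_iff' measurableSet_Ioo).2 (Eventually.of_forall hlim))
    refine this.congr' ?_
    filter_upwards [Ioo_mem_nhdsGT (sub_pos.2 hab)] with ε hε
    have hset : Ioo a b ∩ Iio (b - ε) = Ioo a (b - ε) := by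
      ext t
      simp only [mem_inter_iff, mem_Ioo, mem_Iio]
      grind
    rw [intervalIntegral.integral_of_le (by linarith [hε.2]), integral_Ioc_eq_integral_Ioo,
      hF, setIntegral_indicator measurableSet_Iio, hset]
    refine setIntegral_congr_fun measurableSet_Ioo fun t ht => ?_
    rw [← hFeq ε t ht.2]
    rw [hF]
    simp only
    rw [indicator_of_mem (mem_Iio.2 ht.2)]

/-- The finite part of `∫ t in a..s, H s t / (s - t)`. -/
def lowerPF (H : ℝ → ℝ → ℝ) (a s : ℝ) : ℝ :=
  upperPF (fun s' t' => H (-t') (-s')) (-a) (-s)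

theorem truncated_reflect (H : ℝ → ℝ → ℝ) (a s ε : ℝ) :
    ∫ s' in (-s + ε)..(-a), H s (-s') / (s' - -s) = ∫ t in a..(s - ε), H s t / (s - t) := by
  have := intervalIntegral.integral_comp_neg (a := -s + ε) (b := -a) (fun t => H s t / (s - t))
  rw [neg_neg, neg_add, neg_neg, ← sub_eq_add_neg] at this
  rw [← this]
  refine intervalIntegral.integral_congr fun s' _ => ?_
  ring_nf

theorem continuous_reflect {H : ℝ → ℝ → ℝ} (hH : Continuous H.uncurry) :
    Continuous (Function.uncurry fun s' t' => H (-t') (-s')) :=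
  hH.comp (by fun_prop : Continuous fun p : ℝ × ℝ => (-p.2, -p.1))

theorem tendsto_lowerPF {H : ℝ → ℝ → ℝ} (hH : Continuous H.uncurry) {s a K α : ℝ}
    (hα : 0 < α) (has : a < s) (h : ∀ t ∈ Ico a s, |H s t - H s s| ≤ K * (s - t) ^ α) :
    Tendsto (fun ε => (∫ t in a..(s - ε), H s t / (s - t)) + H s s * Real.log ε)
      (𝓝[>] 0) (𝓝 (lowerPF H a s)) := by
  have := tendsto_upperPF (continuous_reflect hH) (t := -s) (b := -a) (K := K) hα (by linarith)
    (fun t' ht' => by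
      have := h (-t') ⟨by linarith [ht'.2], by linarith [ht'.1]⟩
      simp only [neg_neg]
      convert this using 3
      ring)
  simpa only [neg_neg, truncated_reflect] using! this

theorem integrableOn_lowerPF_and_tendsto {H : ℝ → ℝ → ℝ} (hH : Continuous H.uncurry)
    {a b K α : ℝ} (hα : 0 < α) (hab : a < b) (hK : 0 ≤ K)
    (h : ∀ s ∈ Icc a b, ∀ t ∈ Ico a s, |H s t - H s s| ≤ K * (s - t) ^ α) :
    IntegrableOn (lowerPF H a) (Icc a b) ∧
    Tendsto (fun ε => ∫ s in (a + ε)..b,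
        ((∫ t in a..(s - ε), H s t / (s - t)) + H s s * Real.log ε))
      (𝓝[>] 0) (𝓝 (∫ s in Icc a b, lowerPF H a s)) := by
  obtain ⟨hi, hl⟩ := integrableOn_upperPF_and_tendsto (continuous_reflect hH) (a := -b) (b := -a)
    (K := K) hα (by linarith) hK (fun s' hs' t' ht' => by
      have := h (-s') ⟨by linarith [hs'.2], by linarith [hs'.1]⟩ (-t')
        ⟨by linarith [ht'.2], by linarith [ht'.1]⟩
      convert this using 3
      ring)
  refine ⟨?_, ?_⟩
  · have := (integrableOn_Icc_iff_integrableOn_Ioc (by simp)).1 hi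
    rw [← intervalIntegrable_iff_integrableOn_Ioc_of_le (by linarith),
      IntervalIntegrable.iff_comp_neg (by simp)] at this
    simp only [neg_neg] at this
    rw [integrableOn_Icc_iff_integrableOn_Ioc,
      ← intervalIntegrable_iff_integrableOn_Ioc_of_le hab.le]
    exact this.symm
  · have hint : ∫ t in Icc (-b) (-a), upperPF (fun s' t' => H (-t') (-s')) (-a) t =
        ∫ s in Icc a b, lowerPF H a s := by
      rw [integral_Icc_eq_integral_Ioc, integral_Icc_eq_integral_Ioc,
        ← intervalIntegral.integral_of_le (by linarith), ← intervalIntegral.integral_of_le hab.le]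
      simpa only [neg_neg, lowerPF] using (intervalIntegral.integral_comp_neg (a := a) (b := b)
        (fun t => upperPF (fun s' t' => H (-t') (-s')) (-a) t)).symm
    rw [← hint]
    refine hl.congr fun ε => ?_
    have := intervalIntegral.integral_comp_neg (a := a + ε) (b := b) (fun t =>
      (∫ s in (t + ε)..(-a), H (-t) (-s) / (s - t)) + H (-t) (-t) * Real.log ε)
    rw [show -(a + ε) = -a - ε by ring] at this
    rw [← this]
    simp only [neg_neg, truncated_reflect]

theorem tendsto_boundary_terms {D : ℝ → ℝ} (hD : Continuous D) {a b : ℝ} (hab : a < b) :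
    Tendsto (fun ε => ((∫ t in a..(b - ε), D t) - ∫ t in (a + ε)..b, D t) * Real.log ε)
      (𝓝[>] 0) (𝓝 0) := by
  obtain ⟨M, hM⟩ := (isCompact_Icc (a := a) (b := b)).exists_bound_of_continuousOn hD.continuousOn
  have hlog : Tendsto (fun ε => 2 * M * |Real.log ε * ε|) (𝓝[>] 0) (𝓝 0) := by
    have h := tendsto_log_mul_rpow_nhdsGT_zero zero_lt_one
    simp only [Real.rpow_one] at h
    simpa using h.abs.const_mul (2 * M)
  refine squeeze_zero_norm' ?_ hlog
  filter_upwards [Ioo_mem_nhdsGT (sub_pos.2 hab)] with ε hε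
  have hi : ∀ c d, IntervalIntegrable D volume c d := fun c d => hD.intervalIntegrable c d
  have hsplit : (∫ t in a..(b - ε), D t) - ∫ t in (a + ε)..b, D t =
      (∫ t in a..(a + ε), D t) - ∫ t in (b - ε)..b, D t := by
    rw [sub_eq_sub_iff_add_eq_add, intervalIntegral.integral_add_adjacent_intervals (hi _ _) (hi _ _),
      intervalIntegral.integral_add_adjacent_intervals (hi _ _) (hi _ _)]
  have h₁ : ‖∫ t in a..(a + ε), D t‖ ≤ M * ε := by
    have := intervalIntegral.norm_integral_le_of_norm_le_const (a := a) (b := a + ε) (f := D)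
      (C := M) fun t ht => by
        rw [uIoc_of_le (by linarith [hε.1])] at ht
        exact hM t ⟨ht.1.le, by linarith [ht.2, hε.2]⟩
    rwa [add_sub_cancel_left, abs_of_pos hε.1] at this
  have h₂ : ‖∫ t in (b - ε)..b, D t‖ ≤ M * ε := by
    have := intervalIntegral.norm_integral_le_of_norm_le_const (a := b - ε) (b := b) (f := D)
      (C := M) fun t ht => by
        rw [uIoc_of_le (by linarith [hε.1])] at ht
        exact hM t ⟨by linarith [ht.1, hε.2], ht.2⟩
    rwa [sub_sub_cancel, abs_of_pos hε.1] at this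
  rw [hsplit, norm_mul, abs_mul, abs_of_pos hε.1, Real.norm_eq_abs (Real.log ε)]
  calc _ ≤ (M * ε + M * ε) * |Real.log ε| := by
        gcongr
        exact (norm_sub_le _ _).trans (add_le_add h₁ h₂)
    _ = _ := by ring

theorem integral_upperPF_eq_integral_lowerPF {H : ℝ → ℝ → ℝ} (hH : Continuous H.uncurry)
    {a b K α : ℝ} (hα : 0 < α) (hab : a < b) (hK : 0 ≤ K)
    (hu : ∀ t ∈ Icc a b, ∀ s ∈ Ioc t b, |H s t - H t t| ≤ K * (s - t) ^ α)
    (hl : ∀ s ∈ Icc a b, ∀ t ∈ Ico a s, |H s t - H s s| ≤ K * (s - t) ^ α) :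
    ∫ t in Icc a b, upperPF H b t = ∫ s in Icc a b, lowerPF H a s := by
  have hdiag : Continuous fun t => H t t := hH.comp (by fun_prop : Continuous fun t : ℝ => (t, t))
  have hlim := (integrableOn_upperPF_and_tendsto hH hα hab hK hu).2.sub
    (integrableOn_lowerPF_and_tendsto hH hα hab hK hl).2
  refine sub_eq_zero.1 (tendsto_nhds_unique (hlim.congr' ?_) (tendsto_boundary_terms hdiag hab))
  filter_upwards [Ioo_mem_nhdsGT (sub_pos.2 hab)] with ε hε
  have hi : ∀ c d, IntervalIntegrable (fun t => H t t * Real.log ε) volume c d := fun c d =>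
    (hdiag.mul_const _).intervalIntegrable c d
  have hiu : IntervalIntegrable (fun t => ∫ s in (t + ε)..b, H s t / (s - t)) volume a (b - ε) := by
    have h := ((continuous_truncated hH hε.1 b).sub (hdiag.mul_const (Real.log ε))).intervalIntegrable
      (μ := volume) a (b - ε)
    refine h.congr fun t ht => ?_
    rw [uIoc_of_le (by linarith [hε.2])] at ht
    rw [intervalIntegral_div_sub_eq_max _ (by linarith [ht.2])]
    exact add_sub_cancel_right _ _
  have hil : IntervalIntegrable (fun s => ∫ t in a..(s - ε), H s t / (s - t)) volume (a + ε) b := by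
    have hc := intervalIntegral.continuous_parametric_intervalIntegral_of_continuous
      (μ := volume) (a₀ := a) (f := fun s t => H s t / max (s - t) ε) (s := fun s => s - ε)
      (continuous_div_max hH hε.1) (by fun_prop)
    refine (hc.intervalIntegrable (μ := volume) (a + ε) b).congr fun s hs => ?_
    rw [uIoc_of_le (by linarith [hε.2])] at hs
    refine intervalIntegral.integral_congr fun t ht => ?_
    rw [uIcc_of_le (by linarith [hs.1])] at ht
    rw [max_eq_left (by linarith [ht.2])]
  rw [intervalIntegral.integral_add hiu (hi _ _), intervalIntegral.integral_add hil (hi _ _),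
    integral_cauchy_truncated_swap hH hε.1 (by linarith [hε.2]),
    intervalIntegral.integral_mul_const, intervalIntegral.integral_mul_const]
  ring

/-- Integration by parts turns the order-2 finite part into the order-1 finite part of the
derivative. -/
theorem hasPF2Upper_of_deriv {φ ψ : ℝ → ℝ} {x b L : ℝ} (hxb : x < b) (hψ : Continuous ψ)
    (hφ : ∀ s ∈ Icc x b, HasDerivWithinAt φ (ψ s) (Icc x b) s)
    (hL : Tendsto (fun ε => (∫ s in (x + ε)..b, ψ s / (s - x)) + ψ x * Real.log ε)
      (𝓝[>] 0) (𝓝 L)) :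
    HasPF2Upper φ (ψ x) x b (L + ψ x - φ b / (b - x)) := by
  have hslope : Tendsto (fun ε => (φ (x + ε) - φ x) / ε) (𝓝[>] 0) (𝓝 (ψ x)) := by
    have h := (hφ x (left_mem_Icc.2 hxb.le)).mono_of_mem_nhdsWithin
      (Icc_mem_nhdsGE hxb : Icc x b ∈ 𝓝[≥] x)
    have hs : Tendsto (fun ε : ℝ => x + ε) (𝓝[>] 0) (𝓝[>] x) :=
      tendsto_nhdsWithin_iff.2
        ⟨(Continuous.tendsto' (by fun_prop) 0 x (by simp)).mono_left nhdsWithin_le_nhds,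
          eventually_mem_nhdsWithin.mono fun ε hε => lt_add_of_pos_right x hε⟩
    have h := (hasDerivWithinAt_iff_tendsto_slope' self_notMem_Ioi).1 h.Ioi_of_Ici
    simpa [Function.comp_def, slope_def_field] using h.comp hs
  have hlim := ((hL.add hslope).sub_const (φ b / (b - x)))
  refine hlim.congr' ?_
  filter_upwards [Ioo_mem_nhdsGT (sub_pos.2 hxb)] with ε hε
  have hle : x + ε ≤ b := by linarith [hε.2]
  have hne : ∀ s ∈ Icc (x + ε) b, s - x ≠ 0 := fun s hs => by linarith [hs.1, hε.1]
  have hsub : Icc (x + ε) b ⊆ Icc x b := Icc_subset_Icc_left (by linarith [hε.1])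
  have hcφ : ContinuousOn φ (Icc (x + ε) b) := fun s hs =>
    ((hφ s (hsub hs)).continuousWithinAt).mono hsub
  have hi₁ : IntervalIntegrable (fun s => ψ s / (s - x)) volume (x + ε) b :=
    ContinuousOn.intervalIntegrable (by
      rw [uIcc_of_le hle]
      exact hψ.continuousOn.div (by fun_prop) hne)
  have hi₂ : IntervalIntegrable (fun s => φ s / (s - x) ^ 2) volume (x + ε) b :=
    ContinuousOn.intervalIntegrable (by
      rw [uIcc_of_le hle]
      exact hcφ.div (by fun_prop) fun s hs => pow_ne_zero 2 (hne s hs))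
  have hftc := intervalIntegral.integral_eq_sub_of_hasDerivAt_of_le (a := x + ε) (b := b)
    (f := fun s => φ s / (s - x)) (f' := fun s => ψ s / (s - x) - φ s / (s - x) ^ 2) hle
    (hcφ.div (by fun_prop) hne)
    (fun s hs => by
      have hd := (hφ s (hsub (Ioo_subset_Icc_self hs))).hasDerivAt
        (Icc_mem_nhds (by linarith [hs.1, hε.1]) hs.2)
      have hn := hne s (Ioo_subset_Icc_self hs)
      have heq : ψ s / (s - x) - φ s / (s - x) ^ 2 =
          (ψ s * (s - x) - φ s * 1) / (s - x) ^ 2 := by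
        field_simp
      rw [heq]
      exact hd.div ((hasDerivAt_id s).sub_const x) hn)
    (hi₁.sub hi₂)
  rw [intervalIntegral.integral_sub hi₁ hi₂, add_sub_cancel_left] at hftc
  have : ∫ s in (x + ε)..b, φ s / (s - x) ^ 2 =
      (∫ s in (x + ε)..b, ψ s / (s - x)) - φ b / (b - x) + φ (x + ε) / ε := by linarith
  rw [this]
  ring

/-- for `f ∈ C(Ḡ, C^{1+α}(I²))` (partials `f₁ = ∂f/∂E'`, `f₂ = ∂f/∂E`,
both `α`-Hölder uniformly in `x`), assuming `E' ↦ f(x,E_m,E')/(E_m−E')` integrable on `I`: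
`∫_I ( p.f.∫_E^{E_m} f(x,E',E)/(E'−E)² dE' ) dE
 = ∫_I ( p.f.∫_{E₀}^{E'} (∂f/∂E')(x,E',E)/(E'−E) dE ) dE'
   + ∫_I (∂f/∂E')(x,E',E') dE' − ∫_I f(x,E_m,E')/(E_m−E') dE'`. -/
theorem stmt6 (G : Set E3) (hGopen : IsOpen G) (hGbdd : Bornology.IsBounded G)
    (E₀ Em α : ℝ) (hE₀ : 0 ≤ E₀) (hI : E₀ < Em) (hα : 0 < α)
    (f f₁ f₂ : E3 → ℝ → ℝ → ℝ) (C : ℝ)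
    (hf : ContinuousOn (fun p : E3 × ℝ × ℝ => f p.1 p.2.1 p.2.2)
      (closure G ×ˢ Set.Icc E₀ Em ×ˢ Set.Icc E₀ Em))
    (hf₁ : ContinuousOn (fun p : E3 × ℝ × ℝ => f₁ p.1 p.2.1 p.2.2)
      (closure G ×ˢ Set.Icc E₀ Em ×ˢ Set.Icc E₀ Em))
    (hf₂ : ContinuousOn (fun p : E3 × ℝ × ℝ => f₂ p.1 p.2.1 p.2.2)
      (closure G ×ˢ Set.Icc E₀ Em ×ˢ Set.Icc E₀ Em))
    (hderiv₁ : ∀ x ∈ closure G, ∀ E ∈ Set.Icc E₀ Em, ∀ E' ∈ Set.Icc E₀ Em,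
      HasDerivWithinAt (fun s => f x s E) (f₁ x E' E) (Set.Icc E₀ Em) E')
    (hderiv₂ : ∀ x ∈ closure G, ∀ E' ∈ Set.Icc E₀ Em, ∀ E ∈ Set.Icc E₀ Em,
      HasDerivWithinAt (fun t => f x E' t) (f₂ x E' E) (Set.Icc E₀ Em) E)
    (hHolder₁ : ∀ x ∈ closure G, ∀ E₁' ∈ Set.Icc E₀ Em, ∀ E₁ ∈ Set.Icc E₀ Em,
      ∀ E₂' ∈ Set.Icc E₀ Em, ∀ E₂ ∈ Set.Icc E₀ Em,
      |f₁ x E₁' E₁ - f₁ x E₂' E₂| ≤ C * (|E₁' - E₂'| ^ α + |E₁ - E₂| ^ α))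
    (hHolder₂ : ∀ x ∈ closure G, ∀ E₁' ∈ Set.Icc E₀ Em, ∀ E₁ ∈ Set.Icc E₀ Em,
      ∀ E₂' ∈ Set.Icc E₀ Em, ∀ E₂ ∈ Set.Icc E₀ Em,
      |f₂ x E₁' E₁ - f₂ x E₂' E₂| ≤ C * (|E₁' - E₂'| ^ α + |E₁ - E₂| ^ α))
    (hint : ∀ x ∈ closure G,
      IntegrableOn (fun E' => f x Em E' / (Em - E')) (Set.Icc E₀ Em)) :
    ∀ x ∈ closure G, ∃ g₁ g₂ : ℝ → ℝ,
      (∀ E ∈ Set.Ico E₀ Em,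
        HasPF2Upper (fun E' => f x E' E) (f₁ x E E) E Em (g₁ E)) ∧
      (∀ E' ∈ Set.Ioc E₀ Em,
        HasPF1Lower (fun E => f₁ x E' E) E₀ E' (g₂ E')) ∧
      IntegrableOn g₁ (Set.Icc E₀ Em) ∧ IntegrableOn g₂ (Set.Icc E₀ Em) ∧
      ∫ E in Set.Icc E₀ Em, g₁ E
        = (∫ E' in Set.Icc E₀ Em, g₂ E') + (∫ E' in Set.Icc E₀ Em, f₁ x E' E')
          - ∫ E' in Set.Icc E₀ Em, f x Em E' / (Em - E') := by
  intro x hx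
  set p : ℝ → ℝ := fun s => projIcc E₀ Em hI.le s with hp
  have hpc : Continuous p := continuous_subtype_val.comp continuous_projIcc
  have hpm : ∀ s, p s ∈ Icc E₀ Em := fun s => (projIcc E₀ Em hI.le s).2
  have hpe : ∀ s ∈ Icc E₀ Em, p s = s := fun s hs => by simp [hp, projIcc_of_mem hI.le hs]
  set H : ℝ → ℝ → ℝ := fun s t => f₁ x (p s) (p t) with hHdef
  have hHe : ∀ s ∈ Icc E₀ Em, ∀ t ∈ Icc E₀ Em, H s t = f₁ x s t := fun s hs t ht => by
    simp only [hHdef, hpe s hs, hpe t ht]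
  have hH : Continuous H.uncurry :=
    hf₁.comp_continuous (f := fun q : ℝ × ℝ => (x, p q.1, p q.2)) (by fun_prop)
      fun q => ⟨hx, hpm _, hpm _⟩
  have hdiag : Continuous fun t => H t t := hH.comp (by fun_prop : Continuous fun t : ℝ => (t, t))
  have hC : 0 ≤ C := by
    have hl := left_mem_Icc.2 hI.le
    have hr := right_mem_Icc.2 hI.le
    have h := (abs_nonneg _).trans (hHolder₁ x hx Em hr Em hr E₀ hl E₀ hl)
    have hpos : 0 < |Em - E₀| ^ α := Real.rpow_pos_of_pos (abs_pos.2 (by linarith)) α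
    exact nonneg_of_mul_nonneg_left h (by linarith)
  have hu : ∀ t ∈ Icc E₀ Em, ∀ s ∈ Ioc t Em, |H s t - H t t| ≤ C * (s - t) ^ α := by
    intro t ht s hs
    have hs' : s ∈ Icc E₀ Em := ⟨by linarith [ht.1, hs.1], hs.2⟩
    rw [hHe s hs' t ht, hHe t ht t ht]
    have h := hHolder₁ x hx s hs' t ht t ht t ht
    rwa [sub_self t, abs_zero, Real.zero_rpow hα.ne', add_zero, abs_of_pos (sub_pos.2 hs.1)] at h
  have hl : ∀ s ∈ Icc E₀ Em, ∀ t ∈ Ico E₀ s, |H s t - H s s| ≤ C * (s - t) ^ α := by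
    intro s hs t ht
    have ht' : t ∈ Icc E₀ Em := ⟨ht.1, by linarith [ht.2, hs.2]⟩
    rw [hHe s hs t ht', hHe s hs s hs]
    have h := hHolder₁ x hx s hs t ht' s hs s hs
    rwa [sub_self s, abs_zero, Real.zero_rpow hα.ne', zero_add, abs_sub_comm t s,
      abs_of_pos (sub_pos.2 ht.2)] at h
  have hupi := (integrableOn_upperPF_and_tendsto hH hα hI hC hu).1
  have hloi := (integrableOn_lowerPF_and_tendsto hH hα hI hC hl).1
  have hDi : IntegrableOn (fun t => H t t) (Icc E₀ Em) :=
    hdiag.continuousOn.integrableOn_compact isCompact_Icc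
  refine ⟨fun E => upperPF H Em E + H E E - f x Em E / (Em - E), lowerPF H E₀, ?_, ?_,
    (hupi.add hDi).sub (hint x hx), hloi, ?_⟩
  · intro E hE
    have hE' : E ∈ Icc E₀ Em := Ico_subset_Icc_self hE
    have hsub : Icc E Em ⊆ Icc E₀ Em := Icc_subset_Icc_left hE.1
    rw [← hHe E hE' E hE']
    refine hasPF2Upper_of_deriv (φ := fun s => f x s E) (ψ := fun s => H s E) hE.2
      (hH.comp (by fun_prop : Continuous fun s : ℝ => (s, E))) (fun s hs => ?_)
      (tendsto_upperPF hH hα hE.2 (hu E hE'))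
    rw [hHe s (hsub hs) E hE']
    exact (hderiv₁ x hx E hE' s (hsub hs)).mono hsub
  · intro s hs
    have hs' : s ∈ Icc E₀ Em := Ioc_subset_Icc_self hs
    refine (tendsto_lowerPF hH hα hs.1 (hl s hs')).congr' ?_
    filter_upwards [Ioo_mem_nhdsGT (sub_pos.2 hs.1)] with ε hε
    rw [hHe s hs' s hs']
    congr 1
    refine intervalIntegral.integral_congr fun t ht => ?_
    rw [uIcc_of_le (by linarith [hε.2])] at ht
    rw [hHe s hs' t ⟨ht.1, by linarith [ht.2, hε.1, hs.2]⟩]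
  · have hD : ∫ t in Icc E₀ Em, f₁ x t t = ∫ t in Icc E₀ Em, H t t :=
      setIntegral_congr_fun measurableSet_Icc fun t ht => (hHe t ht t ht).symm
    rw [hD, ← integral_upperPF_eq_integral_lowerPF hH hα hI hC hu hl]
    have h₁ := integral_sub (hupi.add hDi) (hint x hx)
    have h₂ := integral_add hupi hDi
    simp only [Pi.add_apply] at h₁
    rw [h₁, h₂]
end
end

section
/- Let f : S×S → ℝ be continuous and let −1 < t < 1. Then ∫_S ( ∫_0^{2π} f(ω, R(ω)g_t(s)) ds ) dω = ∫_S ( ∫_0^{2π} f(R(ω')g_t(s), ω') ds ) dω', where g_t(s) := (√(1−t²)·cos s, √(1−t²)·sin s, t) and the outer integrals are with respect to the surface measure on S. Equivalently, in terms of path-length integrals over the circles Γ_t^ω := {ω' ∈ S : ω·ω' = t}: ∫_S ∫_{Γ_t^ω} f(ω,ω') dℓ(ω') dω = ∫_S ∫_{Γ_t^{ω'}} f(ω,ω') dℓ(ω) dω'. -/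
open MeasureTheory Filter Set Metric
open scoped Topology Real

noncomputable section

/-- The surface measure on the unit sphere `S² ⊂ ℝ³`, viewed as a measure on `ℝ³`. -/
def nuS : Measure E3 := ((volume : Measure E3).toSphere).map Subtype.val

/-- The vector `(a,b,c) ∈ ℝ³` as an element of `EuclideanSpace ℝ (Fin 3)`. -/
def vec3 (a b c : ℝ) : E3 := (EuclideanSpace.equiv (Fin 3) ℝ).symm ![a, b, c]

/-- The third standard basis vector `e₃`. -/
def e₃ : E3 := EuclideanSpace.single 2 1

/-- The constant-speed parametrization `g_t(s) = (√(1−t²)cos s, √(1−t²)sin s, t)` of the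
horizontal circle at height `t`. -/
def gcirc (t s : ℝ) : E3 :=
  vec3 (Real.sqrt (1 - t ^ 2) * Real.cos s) (Real.sqrt (1 - t ^ 2) * Real.sin s) t

open scoped Pointwise in
lemma nuS_apply {s : Set E3} (hs : MeasurableSet s) :
    nuS s = 3 * volume (Ioo (0 : ℝ) 1 • (sphere (0 : E3) 1 ∩ s)) := by
  rw [nuS, Measure.map_apply measurable_subtype_coe hs,
    Measure.toSphere_apply' _ (measurable_subtype_coe hs), Subtype.image_preimage_coe]
  simp

open scoped Pointwise in
lemma measurePreserving_nuS (Q : E3 ≃ₗᵢ[ℝ] E3) : MeasurePreserving Q nuS nuS := by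
  refine ⟨Q.continuous.measurable, Measure.ext fun s hs => ?_⟩
  rw [Measure.map_apply Q.continuous.measurable hs, nuS_apply hs,
    nuS_apply (Q.continuous.measurable hs),
    ← Q.measurePreserving.measure_preimage_emb Q.toHomeomorph.measurableEmbedding
      (Ioo (0 : ℝ) 1 • (sphere (0 : E3) 1 ∩ s))]
  congr 2
  ext x
  simp only [Set.mem_smul, mem_preimage, mem_inter_iff, mem_sphere_zero_iff_norm]
  constructor
  · rintro ⟨r, hr, y, ⟨hy, hys⟩, rfl⟩
    exact ⟨r, hr, Q y, ⟨by simpa using hy, hys⟩, by simp⟩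
  · rintro ⟨r, hr, y, ⟨hy, hys⟩, hxy⟩
    refine ⟨r, hr, Q.symm y, ⟨by simpa using hy, by simpa using hys⟩, Q.injective ?_⟩
    simpa using hxy

instance : IsFiniteMeasure nuS := by
  unfold nuS
  infer_instance

lemma ae_nuS_norm_eq_one : ∀ᵐ ω ∂nuS, ‖ω‖ = 1 := by
  rw [nuS, ae_map_iff measurable_subtype_coe.aemeasurable
    (measurableSet_eq_fun measurable_norm measurable_const)]
  exact Eventually.of_forall fun x => by simp

lemma vec3_eq (a b c : ℝ) : vec3 a b c = !₂[a, b, c] := rfl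

lemma e₃_eq : e₃ = vec3 0 0 1 := by
  ext i
  fin_cases i <;> simp [e₃, vec3_eq]

lemma gcirc_eq (t s : ℝ) : gcirc t s = (√(1 - t ^ 2) * Real.cos s) • vec3 1 0 0 +
    (√(1 - t ^ 2) * Real.sin s) • vec3 0 1 0 + t • e₃ := by
  ext i
  fin_cases i <;> simp [gcirc, e₃_eq, vec3_eq]

lemma norm_e₃ : ‖e₃‖ = 1 := by simp [e₃]

lemma norm_gcirc {t : ℝ} (ht₁ : -1 < t) (ht₂ : t < 1) (s : ℝ) : ‖gcirc t s‖ = 1 := by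
  have h : √(1 - t ^ 2) ^ 2 = 1 - t ^ 2 := Real.sq_sqrt (by nlinarith)
  rw [← sq_eq_sq₀ (norm_nonneg _) zero_le_one, EuclideanSpace.norm_sq_eq]
  simp only [gcirc, vec3_eq, Fin.sum_univ_three, Real.norm_eq_abs, sq_abs]
  simp only [Matrix.cons_val]
  linear_combination (Real.cos s ^ 2 + Real.sin s ^ 2) * h + (1 - t ^ 2) * Real.sin_sq_add_cos_sq s

lemma gcirc_periodic (t : ℝ) : Function.Periodic (gcirc t) (2 * π) := fun s => by
  simp [gcirc]

lemma exists_gcirc_of_fix (P : E3 ≃ₗᵢ[ℝ] E3) (hP : P e₃ = e₃) (t : ℝ) :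
    ∃ θ : ℝ, (∀ s, P (gcirc t s) = gcirc t (θ + s)) ∨ ∀ s, P (gcirc t s) = gcirc t (θ - s) := by
  have h1 := P.inner_map_map (vec3 1 0 0) (vec3 1 0 0)
  have h2 := P.inner_map_map (vec3 0 1 0) (vec3 0 1 0)
  have h12 := P.inner_map_map (vec3 1 0 0) (vec3 0 1 0)
  have h13 := P.inner_map_map (vec3 1 0 0) e₃
  have h23 := P.inner_map_map (vec3 0 1 0) e₃
  rw [hP] at h13 h23
  set u := P (vec3 1 0 0) with hu
  set w := P (vec3 0 1 0) with hw
  have hg : ∀ s, P (gcirc t s) = (√(1 - t ^ 2) * Real.cos s) • u +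
      (√(1 - t ^ 2) * Real.sin s) • w + t • e₃ := fun s => by
    rw [gcirc_eq, map_add, map_add, map_smul, map_smul, map_smul, hP]
  simp only [e₃_eq, vec3_eq, PiLp.inner_apply, Fin.sum_univ_three, RCLike.inner_apply,
    conj_trivial, Matrix.cons_val, mul_zero, mul_one, zero_mul, one_mul, add_zero, zero_add] at h1 h2 h12 h13 h23
  rw [h13] at h1 h12
  rw [h23] at h2 h12
  simp only [mul_zero, add_zero] at h1 h2 h12
  obtain ⟨θ, hc, hs⟩ : ∃ θ, u 0 = Real.cos θ ∧ u 1 = Real.sin θ := by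
    have hn : ‖(⟨u 0, u 1⟩ : ℂ)‖ = 1 := by
      rw [← sq_eq_sq₀ (norm_nonneg _) zero_le_one, ← Complex.normSq_eq_norm_sq,
        Complex.normSq_mk]
      linarith
    obtain ⟨θ, hθ⟩ := (Complex.norm_eq_one_iff _).1 hn
    refine ⟨θ, ?_, ?_⟩
    · simpa [Complex.exp_ofReal_mul_I_re] using (congrArg Complex.re hθ).symm
    · simpa [Complex.exp_ofReal_mul_I_im] using (congrArg Complex.im hθ).symm
  refine ⟨θ, ?_⟩
  rw [hc, hs] at h1 h12
  have hε : (Real.cos θ * w 1 - Real.sin θ * w 0) ^ 2 = 1 := by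
    linear_combination (w 0 ^ 2 + w 1 ^ 2) * h1 + h2 -
      (w 0 * Real.cos θ + w 1 * Real.sin θ) * h12
  have hw0 : w 0 = -(Real.cos θ * w 1 - Real.sin θ * w 0) * Real.sin θ := by
    linear_combination (- w 0) * h1 + Real.cos θ * h12
  have hw1 : w 1 = (Real.cos θ * w 1 - Real.sin θ * w 0) * Real.cos θ := by
    linear_combination (- w 1) * h1 + Real.sin θ * h12
  rcases mul_self_eq_one_iff.1 ((sq _).symm.trans hε) with h | h
  all_goals rw [h] at hw0 hw1
  · left
    intro s
    rw [hg]
    ext i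
    fin_cases i <;> simp [gcirc, e₃_eq, vec3_eq, hc, hs, hw0, hw1, h13, h23, Real.cos_add,
      Real.sin_add] <;> ring
  · right
    intro s
    rw [hg]
    ext i
    fin_cases i <;> simp [gcirc, e₃_eq, vec3_eq, hc, hs, hw0, hw1, h13, h23, Real.cos_sub,
      Real.sin_sub] <;> ring

lemma integral_gcirc_of_fix (P : E3 ≃ₗᵢ[ℝ] E3) (hP : P e₃ = e₃) (t : ℝ) (F : E3 → ℝ) :
    ∫ s in (0 : ℝ)..(2 * π), F (P (gcirc t s)) = ∫ s in (0 : ℝ)..(2 * π), F (gcirc t s) := by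
  have hper : Function.Periodic (fun s => F (gcirc t s)) (2 * π) := (gcirc_periodic t).comp F
  obtain ⟨θ, h | h⟩ := exists_gcirc_of_fix P hP t
  · simp only [h]
    rw [intervalIntegral.integral_comp_add_left (fun s => F (gcirc t s)), add_zero]
    simpa using hper.intervalIntegral_add_eq θ 0
  · simp only [h]
    rw [intervalIntegral.integral_comp_sub_left (fun s => F (gcirc t s)), sub_zero]
    simpa using hper.intervalIntegral_add_eq (θ - 2 * π) 0

/-- Two orthogonal maps with the same value at `e₃` give the same circle integral. -/
lemma integral_gcirc_congr (P Q : E3 ≃ₗᵢ[ℝ] E3) (h : P e₃ = Q e₃) (t : ℝ) (F : E3 → ℝ) :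
    ∫ s in (0 : ℝ)..(2 * π), F (P (gcirc t s)) =
      ∫ s in (0 : ℝ)..(2 * π), F (Q (gcirc t s)) := by
  have := integral_gcirc_of_fix (P.trans Q.symm) (by simp [h]) t (fun x => F (Q x))
  simpa using this

/-- The orthogonal group of `ℝ³`. -/
abbrev O3 : Type := unitary (E3 →L[ℝ] E3)

instance : ProperSpace (E3 →L[ℝ] E3) := FiniteDimensional.proper ℝ _

instance : ContinuousStar (E3 →L[ℝ] E3) :=
  ⟨(ContinuousLinearMap.adjoint (𝕜 := ℝ) (E := E3) (F := E3)).continuous⟩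

instance : CompactSpace O3 := by
  refine isCompact_iff_compactSpace.1 ?_
  refine Metric.isCompact_of_isClosed_isBounded isClosed_unitary ?_
  refine isBounded_iff_forall_norm_le.2 ⟨1, fun Q hQ => ?_⟩
  exact ContinuousLinearMap.opNorm_le_bound _ zero_le_one fun x => by
    simpa using (Unitary.norm_map ⟨Q, hQ⟩ x).le

instance : MeasurableSpace O3 := borel O3

instance : BorelSpace O3 := ⟨rfl⟩

/-- A right-invariant finite measure on the orthogonal group. -/
def haarO3 : Measure O3 := (Measure.haar : Measure O3).inv

instance : haarO3.IsMulRightInvariant := by unfold haarO3; infer_instance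

instance : IsFiniteMeasure haarO3 := by
  unfold haarO3 Measure.inv
  infer_instance

lemma haarO3_real_univ_ne_zero : haarO3.real univ ≠ 0 := by
  rw [measureReal_ne_zero_iff, haarO3, Measure.inv_apply]
  simp [NeZero.ne]

/-- The average of `h` over the diagonal orbit of `(x, y)`. -/
def orbitAverage (h : BoundedContinuousFunction (E3 × E3) ℝ) (x y : E3) : ℝ :=
  ∫ Q : O3, h ((Q : E3 →L[ℝ] E3) x, (Q : E3 →L[ℝ] E3) y) ∂haarO3

lemma orbitAverage_map (h : BoundedContinuousFunction (E3 × E3) ℝ) (P : E3 ≃ₗᵢ[ℝ] E3)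
    (x y : E3) : orbitAverage h (P x) (P y) = orbitAverage h x y := by
  have := integral_mul_right_eq_self (μ := haarO3)
    (fun Q : O3 => h ((Q : E3 →L[ℝ] E3) x, (Q : E3 →L[ℝ] E3) y)) (Unitary.linearIsometryEquiv.symm P)
  simpa [orbitAverage] using this

lemma orbitAverage_swap (h : BoundedContinuousFunction (E3 × E3) ℝ) {x y : E3}
    (hxy : ‖x‖ = ‖y‖) : orbitAverage h x y = orbitAverage h y x := by
  have h1 := Submodule.reflection_sub hxy
  have h2 : (ℝ ∙ (x - y))ᗮ.reflection y = x := by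
    simpa [h1] using Submodule.reflection_reflection (ℝ ∙ (x - y))ᗮ x
  conv_rhs => rw [← orbitAverage_map h (ℝ ∙ (x - y))ᗮ.reflection, h1, h2]

/-- Integration of a function on pairs of points against the flags `(ω, R ω (g_t s))`. -/
def flagIntegral (R : E3 → (E3 ≃ₗᵢ[ℝ] E3)) (t : ℝ) (h : E3 × E3 → ℝ) : ℝ :=
  ∫ ω, (∫ s in (0:ℝ)..(2 * π), h (ω, R ω (gcirc t s))) ∂nuS

lemma flagIntegral_comp (R : E3 → (E3 ≃ₗᵢ[ℝ] E3)) (hR : ∀ ω : E3, ‖ω‖ = 1 → R ω e₃ = ω)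
    (t : ℝ) (h : E3 × E3 → ℝ) (Q : E3 ≃ₗᵢ[ℝ] E3) :
    flagIntegral R t (fun p => h (Q p.1, Q p.2)) = flagIntegral R t h := by
  unfold flagIntegral
  rw [← (measurePreserving_nuS Q).integral_comp Q.toHomeomorph.measurableEmbedding
    (fun ω => ∫ s in (0:ℝ)..(2 * π), h (ω, R ω (gcirc t s)))]
  refine integral_congr_ae ?_
  filter_upwards [ae_nuS_norm_eq_one] with ω hω
  exact integral_gcirc_congr ((R ω).trans Q) (R (Q ω))
    (by simp [hR ω hω, hR (Q ω) (by simpa using hω)]) t (fun x => h (Q ω, x))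

lemma measurable_flag (R : E3 → (E3 ≃ₗᵢ[ℝ] E3)) (hRmeas : ∀ v : E3, Measurable fun ω => R ω v)
    (t : ℝ) : Measurable fun p : E3 × ℝ => R p.1 (gcirc t p.2) := by
  simp only [gcirc_eq, map_add, map_smul]
  have h (v : E3) : Measurable fun p : E3 × ℝ => R p.1 v := (hRmeas v).comp measurable_fst
  have h1 := h (vec3 1 0 0)
  have h2 := h (vec3 0 1 0)
  have h3 := h e₃
  fun_prop

lemma flagIntegral_eq_prod (R : E3 → (E3 ≃ₗᵢ[ℝ] E3))
    (hRmeas : ∀ v : E3, Measurable fun ω => R ω v) (t : ℝ)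
    (h : BoundedContinuousFunction (E3 × E3) ℝ) :
    flagIntegral R t h = ∫ p : E3 × ℝ, h (p.1, R p.1 (gcirc t p.2))
      ∂(nuS.prod (volume.restrict (Ioc 0 (2 * π)))) := by
  rw [integral_prod]
  · simp only [flagIntegral, intervalIntegral.integral_of_le Real.two_pi_pos.le]
  · refine Integrable.of_bound (C := ‖h‖) ?_ (Eventually.of_forall fun p => h.norm_coe_le_norm _)
    exact (h.continuous.measurable.comp
      (measurable_fst.prodMk (measurable_flag R hRmeas t))).aestronglyMeasurable

lemma haar_mul_flagIntegral (R : E3 → (E3 ≃ₗᵢ[ℝ] E3))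
    (hR : ∀ ω : E3, ‖ω‖ = 1 → R ω e₃ = ω) (hRmeas : ∀ v : E3, Measurable fun ω => R ω v)
    (t : ℝ) (h : BoundedContinuousFunction (E3 × E3) ℝ) :
    haarO3.real univ * flagIntegral R t h =
      ∫ p : E3 × ℝ, orbitAverage h e₃ (gcirc t p.2)
        ∂(nuS.prod (volume.restrict (Ioc 0 (2 * π)))) := by
  have key (Q : O3) : flagIntegral R t h = ∫ p : E3 × ℝ,
      h ((Q : E3 →L[ℝ] E3) p.1, (Q : E3 →L[ℝ] E3) (R p.1 (gcirc t p.2)))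
        ∂(nuS.prod (volume.restrict (Ioc 0 (2 * π)))) := by
    rw [← flagIntegral_comp R hR t h (Unitary.linearIsometryEquiv Q)]
    exact flagIntegral_eq_prod R hRmeas t (h.compContinuous
      ⟨fun p => ((Q : E3 →L[ℝ] E3) p.1, (Q : E3 →L[ℝ] E3) p.2), by fun_prop⟩)
  rw [← smul_eq_mul, ← integral_const, integral_congr_ae (Eventually.of_forall key),
    integral_integral_swap]
  · refine integral_congr_ae ?_
    have : ∀ᵐ p : E3 × ℝ ∂(nuS.prod (volume.restrict (Ioc 0 (2 * π)))), ‖p.1‖ = 1 :=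
      Measure.quasiMeasurePreserving_fst.ae ae_nuS_norm_eq_one
    filter_upwards [this] with p hp
    rw [← orbitAverage_map h (R p.1), hR _ hp]
    rfl
  · refine Integrable.of_bound (C := ‖h‖) ?_ (Eventually.of_forall fun p => h.norm_coe_le_norm _)
    have hm := measurable_flag R hRmeas t
    have hev : Continuous fun q : O3 × E3 => (q.1 : E3 →L[ℝ] E3) q.2 := by fun_prop
    have h1 : Measurable fun q : O3 × E3 × ℝ => (q.1 : E3 →L[ℝ] E3) q.2.1 :=
      hev.measurable.comp (measurable_fst.prodMk (measurable_fst.comp measurable_snd))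
    have h2 : Measurable fun q : O3 × E3 × ℝ => (q.1 : E3 →L[ℝ] E3) (R q.2.1 (gcirc t q.2.2)) :=
      hev.measurable.comp (measurable_fst.prodMk (hm.comp measurable_snd))
    exact (h.continuous.measurable.comp (h1.prodMk h2)).aestronglyMeasurable

lemma flagIntegral_swap (R : E3 → (E3 ≃ₗᵢ[ℝ] E3))
    (hR : ∀ ω : E3, ‖ω‖ = 1 → R ω e₃ = ω) (hRmeas : ∀ v : E3, Measurable fun ω => R ω v)
    {t : ℝ} (ht₁ : -1 < t) (ht₂ : t < 1) (h : BoundedContinuousFunction (E3 × E3) ℝ) :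
    flagIntegral R t h = flagIntegral R t fun p => h p.swap := by
  have h2 := haar_mul_flagIntegral R hR hRmeas t (h.compContinuous ⟨Prod.swap, continuous_swap⟩)
  refine mul_left_cancel₀ haarO3_real_univ_ne_zero ?_
  refine (haar_mul_flagIntegral R hR hRmeas t h).trans (Eq.trans ?_ h2.symm)
  congr 1 with p
  exact orbitAverage_swap h (norm_e₃.trans (norm_gcirc ht₁ ht₂ _).symm)

/-- for `f ∈ C(S×S)`, `−1 < t < 1`, and any measurable choice
`ω ↦ R(ω)` of orthogonal maps with `R(ω)e₃ = ω`,
`∫_S ∫_0^{2π} f(ω, R(ω)g_t(s)) ds dω = ∫_S ∫_0^{2π} f(R(ω')g_t(s), ω') ds dω'`,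
i.e. `∫_S ∫_{Γ_t^ω} f(ω,ω') dℓ(ω') dω = ∫_S ∫_{Γ_t^{ω'}} f(ω,ω') dℓ(ω) dω'`. -/
theorem stmt8 (f : E3 → E3 → ℝ)
    (hf : ContinuousOn (fun p : E3 × E3 => f p.1 p.2)
      (sphere (0 : E3) 1 ×ˢ sphere (0 : E3) 1))
    (t : ℝ) (ht₁ : -1 < t) (ht₂ : t < 1)
    (R : E3 → (E3 ≃ₗᵢ[ℝ] E3))
    (hR : ∀ ω : E3, ‖ω‖ = 1 → R ω e₃ = ω)
    (hRmeas : ∀ v : E3, Measurable fun ω => R ω v) :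
    ∫ ω, (∫ s in (0:ℝ)..(2 * π), f ω (R ω (gcirc t s))) ∂nuS
      = ∫ ω', (∫ s in (0:ℝ)..(2 * π), f (R ω' (gcirc t s)) ω') ∂nuS := by
  obtain ⟨h, hh⟩ : ∃ h : BoundedContinuousFunction (E3 × E3) ℝ,
      ∀ x y : E3, ‖x‖ = 1 → ‖y‖ = 1 → h (x, y) = f x y := by
    have hcompact := (isCompact_sphere (0 : E3) 1).prod (isCompact_sphere (0 : E3) 1)
    have : CompactSpace (sphere (0 : E3) 1 ×ˢ sphere (0 : E3) 1 : Set (E3 × E3)) :=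
      isCompact_iff_compactSpace.1 hcompact
    obtain ⟨h, -, hh⟩ :=
      BoundedContinuousFunction.exists_extension_norm_eq_of_isClosedEmbedding
        (BoundedContinuousFunction.mkOfCompact ⟨_, hf.domRestrict⟩)
        hcompact.isClosed.isClosedEmbedding_subtypeVal
    refine ⟨h, fun x y hx hy => ?_⟩
    exact congrFun hh ⟨(x, y), by simpa using hx, by simpa using hy⟩
  have hn (ω : E3) (s : ℝ) : ‖R ω (gcirc t s)‖ = 1 := by
    rw [LinearIsometryEquiv.norm_map, norm_gcirc ht₁ ht₂]
  have hleft : ∫ ω, (∫ s in (0:ℝ)..(2 * π), f ω (R ω (gcirc t s))) ∂nuS = flagIntegral R t h := by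
    refine integral_congr_ae ?_
    filter_upwards [ae_nuS_norm_eq_one] with ω hω
    exact intervalIntegral.integral_congr fun s _ => (hh _ _ hω (hn ω s)).symm
  have hright : ∫ ω', (∫ s in (0:ℝ)..(2 * π), f (R ω' (gcirc t s)) ω') ∂nuS =
      flagIntegral R t fun p => h p.swap := by
    refine integral_congr_ae ?_
    filter_upwards [ae_nuS_norm_eq_one] with ω hω
    exact intervalIntegral.integral_congr fun s _ => (hh _ _ (hn ω s) hω).symm
  rw [hleft, hright, flagIntegral_swap R hR hRmeas ht₁ ht₂]
end
end
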